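/- arXiv:1501.03420 — 6 statements merged into one kernel-verified Lean document; each statement's English description precedes it below -/
import Mathlib

section
/- Let C be a self-adjoint Jacobi matrix with weights {a_n} and diagonal b_n ≡ 0. Let C_e and C_o be the restrictions of the composition C∘C to the closed linear spans of {δ_{2k} : k ∈ ℕ} and {δ_{2k+1} : k ∈ ℕ}, respectively (δ_m the standard basis vector of ℓ²). Then C_e is unitarily equivalent to the Jacobi matrix with entries a_n^e = a_{2n} a_{2n+1}, b_n^e = a_{2n−1}² + a_{2n}² (with a_{−1} = 0), and C_o to the Jacobi matrix with entries a_n^o = a_{2n+1} a_{2n+2}, b_n^o = a_{2n}² + a_{2n+1}². Moreover, if 0 ∉ σ_p(C) and 0 ∉ σ_p(C̃), where C̃ is the self-adjoint Jacobi matrix with weights {a_{n+1}}_{n≥0} and zero diagonal, then C_o and C_e are self-adjoint and σ(C_o) = σ(C_e) = (σ(C))² and σ_p(C_o) = σ_p(C_e) = (σ_p(C))², where X² = {x² : x ∈ X}. -/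
open Filter Topology

noncomputable section

/-- Membership in the weighted ℓ² space with weight `w`. -/
def MemL2w (w : ℕ → ℝ) (f : ℕ → ℂ) : Prop :=
  Summable fun n => w n * ‖f n‖ ^ 2

/-- The weighted ℓ² inner product. -/
def innerW (w : ℕ → ℝ) (f g : ℕ → ℂ) : ℂ :=
  ∑' n, (w n : ℂ) * star (f n) * g n

/-- The formal tridiagonal action of the Jacobi matrix with off-diagonal entries `a`
and diagonal entries `b`:  `(Cx)₀ = b₀x₀ + a₀x₁`,
`(Cx)ₙ = aₙ₋₁xₙ₋₁ + bₙxₙ + aₙxₙ₊₁` for `n ≥ 1`. -/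
def jacobiAct (a b : ℕ → ℝ) (x : ℕ → ℂ) : ℕ → ℂ
  | 0 => (b 0 : ℂ) * x 0 + (a 0 : ℂ) * x 1
  | n + 1 => (a n : ℂ) * x n + (b (n + 1) : ℂ) * x (n + 1) + (a (n + 1) : ℂ) * x (n + 2)

/-- The maximal domain of the formal operator `T` inside the weighted ℓ² space. -/
def DomW (w : ℕ → ℝ) (T : (ℕ → ℂ) → ℕ → ℂ) : Set (ℕ → ℂ) :=
  {x | MemL2w w x ∧ MemL2w w (T x)}

/-- `T`, on its maximal domain in weighted ℓ², is self-adjoint: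
the graph of the adjoint operator coincides with the graph of `T`. -/
def IsSelfAdjointW (w : ℕ → ℝ) (T : (ℕ → ℂ) → ℕ → ℂ) : Prop :=
  ∀ y z : ℕ → ℂ, MemL2w w y → MemL2w w z →
    ((∀ x ∈ DomW w T, innerW w (T x) y = innerW w x z) ↔ (y ∈ DomW w T ∧ T y = z))

/-- The point spectrum (set of eigenvalues) of `T` on its maximal domain. -/
def eigenW (w : ℕ → ℝ) (T : (ℕ → ℂ) → ℕ → ℂ) : Set ℂ :=
  {l | ∃ x ∈ DomW w T, x ≠ 0 ∧ T x = fun n => l * x n}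

/-- The spectrum of `T`: those `l` for which `T - l` is not a bijection from the maximal
domain onto the weighted ℓ² space (for a closed operator this is the usual spectrum). -/
def spectrumW (w : ℕ → ℝ) (T : (ℕ → ℂ) → ℕ → ℂ) : Set ℂ :=
  {l | ¬ ((∀ x ∈ DomW w T, T x = (fun n => l * x n) → x = 0) ∧
          ∀ y : ℕ → ℂ, MemL2w w y → ∃ x ∈ DomW w T, (fun n => T x n - l * x n) = y)}

/-- The essential spectrum: the set of accumulation points of the spectrum. -/
def essSpectrumW (w : ℕ → ℝ) (T : (ℕ → ℂ) → ℕ → ℂ) : Set ℂ :=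
  {z | AccPt z (𝓟 (spectrumW w T))}

/-- The isometry of ℓ² onto the closed linear span of the even coordinate vectors. -/
def evenEmbed (x : ℕ → ℂ) : ℕ → ℂ := fun n => if n % 2 = 0 then x (n / 2) else 0

/-- The isometry of ℓ² onto the closed linear span of the odd coordinate vectors. -/
def oddEmbed (x : ℕ → ℂ) : ℕ → ℂ := fun n => if n % 2 = 1 then x (n / 2) else 0

/-!
With respect to the splitting of `ℓ²` into even and odd parts, `C` is off-diagonal with blocks `B`
and `B'`, so that `C ∘ C = B' B ⊕ B B'`. By von Neumann's argument `C ∘ C + 1` maps its natural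
domain onto `ℓ²`, hence so do `B' B + 1` and `B B' + 1`, and together with the formal adjointness
of `B` and `B'` this makes `B' B` self-adjoint as soon as its maximal domain lies in that of `B`.
The latter holds if `B' B u = -u` has no nonzero solution in `ℓ²`. Such a solution grows at least
as fast as the formal null vector of `B`, which is not in `ℓ²` because `0 ∉ σ_p(C)`. The formal
operator `B B'` is the even part of the square of `C̃` plus `a₀²` in the first diagonal entry, so
for the odd part the same comparison applies with `C̃` in place of `C`. Finally, the equations
`(C - l) ψ = φ` and `(B' B - l²) x = y` are reduced to each other.
-/

/-! ### Self-adjoint graphs -/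

section SelfAdjointGraph

variable {𝕜 V : Type*} [RCLike 𝕜] [NormedAddCommGroup V] [InnerProductSpace 𝕜 V]

/-- `S` is the graph of a self-adjoint operator or, more generally, a self-adjoint relation: it
coincides with its adjoint relation. -/
def IsSelfAdjointGraph (𝕜 : Type*) {V : Type*} [RCLike 𝕜] [NormedAddCommGroup V]
    [InnerProductSpace 𝕜 V] (S : Set (V × V)) : Prop :=
  ∀ y z, (∀ p ∈ S, inner 𝕜 p.2 y = inner 𝕜 p.1 z) ↔ (y, z) ∈ S

lemma isSelfAdjointGraph_of_symm_of_surj {S : Set (V × V)}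
    (hsymm : ∀ p ∈ S, ∀ q ∈ S, inner 𝕜 p.2 q.1 = inner 𝕜 p.1 q.2)
    (hsurj : ∀ y, ∃ p ∈ S, p.2 + p.1 = y) : IsSelfAdjointGraph 𝕜 S := by
  refine fun y z => ⟨fun hyz => ?_, fun hyz p hp => hsymm p hp (y, z) hyz⟩
  obtain ⟨q, hq, hqz⟩ := hsurj (z + y)
  have hy : y = q.1 := by
    obtain ⟨p, hp, hpy⟩ := hsurj (y - q.1)
    refine sub_eq_zero.1 (inner_self_eq_zero (𝕜 := 𝕜).1 ?_)
    calc inner 𝕜 (y - q.1) (y - q.1)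
        = inner 𝕜 p.2 y + inner 𝕜 p.1 y - (inner 𝕜 p.2 q.1 + inner 𝕜 p.1 q.1) := by
          rw [inner_sub_right, ← inner_add_left, ← inner_add_left, hpy]
      _ = inner 𝕜 p.1 (z + y) - inner 𝕜 p.1 (q.2 + q.1) := by
          rw [hyz p hp, hsymm p hp q hq, inner_add_right, inner_add_right]
      _ = 0 := by rw [hqz, sub_self]
  have hz : z = q.2 := by
    rw [← hy] at hqz
    exact (add_right_cancel hqz).symm
  rwa [hy, hz]

/-- Von Neumann's argument: `(y, 0)` splits into `(x, z) ∈ S` and a vector orthogonal to `S`, and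
self-adjointness says that orthogonality of `(y - x, -z)` to `S` means `(z, y - x) ∈ S`. -/
lemma IsSelfAdjointGraph.exists_mem_mem_sub [CompleteSpace V] {S : Set (V × V)}
    (hS : IsSelfAdjointGraph 𝕜 S) (y : V) : ∃ x z, (x, z) ∈ S ∧ (z, y - x) ∈ S := by
  let adj : Submodule 𝕜 (WithLp 2 (V × V)) :=
    (Submodule.span 𝕜 ((fun p : V × V => WithLp.toLp 2 (p.2, -p.1)) '' S))ᗮ
  have mem_adj (x z : V) : WithLp.toLp 2 (x, z) ∈ adj ↔ (x, z) ∈ S := by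
    rw [← hS, ← Submodule.span_singleton_le_iff_mem, ← Submodule.isOrtho_iff_le,
      Submodule.isOrtho_comm, Submodule.isOrtho_span]
    simp only [Set.forall_mem_image, Set.mem_singleton_iff, forall_eq, WithLp.prod_inner_apply,
      inner_neg_left, add_neg_eq_zero]
  obtain ⟨g, hg, h, hh, hgh⟩ := adj.exists_add_mem_mem_orthogonal (WithLp.toLp 2 (y, 0))
  obtain ⟨x, z⟩ := g
  obtain rfl : h = WithLp.toLp 2 (y - x, -z) := by
    rw [eq_sub_of_add_eq' hgh.symm, ← WithLp.toLp_sub, Prod.mk_sub_mk, zero_sub]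
  refine ⟨x, z, (mem_adj x z).1 hg, (hS z (y - x)).1 fun p hp => ?_⟩
  have horth := (Submodule.mem_orthogonal _ _).1 hh _ ((mem_adj p.1 p.2).2 hp)
  rw [WithLp.prod_inner_apply, inner_neg_right, add_neg_eq_zero] at horth
  exact horth.symm

end SelfAdjointGraph

/-! ### Spectra of restrictions to a subspace, and of off-diagonal operators -/

section SpectrumOn

variable {𝕜 E E' F : Type*} [Field 𝕜] [AddCommGroup E] [Module 𝕜 E] [AddCommGroup E']
  [Module 𝕜 E'] [AddCommGroup F] [Module 𝕜 F]

/-- The eigenvalues of `T` with an eigenvector in `H`. -/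
def pointSpectrumOn (H : Submodule 𝕜 E) (T : E →ₗ[𝕜] E) : Set 𝕜 :=
  {l | ∃ x ∈ H, x ≠ 0 ∧ T x = l • x}

/-- The spectrum of the restriction of `T` to its maximal domain `{x ∈ H | T x ∈ H}`, as an
operator in `H`. For a solution `x ∈ H` of `T x - l • x = y ∈ H`, membership in the domain is
automatic. -/
def spectrumOn (H : Submodule 𝕜 E) (T : E →ₗ[𝕜] E) : Set 𝕜 :=
  pointSpectrumOn H T ∪ {l | ¬ ∀ y ∈ H, ∃ x ∈ H, T x - l • x = y}

lemma pointSpectrumOn_conj (e : E ≃ₗ[𝕜] E') {H : Submodule 𝕜 E} {H' : Submodule 𝕜 E'}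
    (hH : ∀ x, e x ∈ H' ↔ x ∈ H) (T : E →ₗ[𝕜] E) :
    pointSpectrumOn H' (e.conj T) = pointSpectrumOn H T := by
  ext l
  simp [pointSpectrumOn, e.surjective.exists, hH, LinearEquiv.conj_apply, ← map_smul]

lemma spectrumOn_conj (e : E ≃ₗ[𝕜] E') {H : Submodule 𝕜 E} {H' : Submodule 𝕜 E'}
    (hH : ∀ x, e x ∈ H' ↔ x ∈ H) (T : E →ₗ[𝕜] E) :
    spectrumOn H' (e.conj T) = spectrumOn H T := by
  rw [spectrumOn, spectrumOn, pointSpectrumOn_conj e hH]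
  simp [e.surjective.exists, e.surjective.forall, hH, LinearEquiv.conj_apply, ← map_smul,
    ← map_sub]

/-- The operator `(u, v) ↦ (B' v, B u)`, whose square is `B' B ⊕ B B'`. -/
def offDiag (B : E →ₗ[𝕜] F) (B' : F →ₗ[𝕜] E) : E × F →ₗ[𝕜] E × F :=
  (B' ∘ₗ LinearMap.snd 𝕜 E F).prod (B ∘ₗ LinearMap.fst 𝕜 E F)

variable {B : E →ₗ[𝕜] F} {B' : F →ₗ[𝕜] E} {H : Submodule 𝕜 E} {K : Submodule 𝕜 F}

lemma offDiag_apply (p : E × F) : offDiag B B' p = (B' p.2, B p.1) := rfl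

lemma offDiag_swap : offDiag B' B = (LinearEquiv.prodComm 𝕜 E F).conj (offDiag B B') := rfl

lemma pointSpectrumOn_offDiag_swap :
    pointSpectrumOn (K.prod H) (offDiag B' B) = pointSpectrumOn (H.prod K) (offDiag B B') := by
  rw [offDiag_swap, pointSpectrumOn_conj (H := H.prod K) _ fun _ => and_comm]

lemma spectrumOn_offDiag_swap :
    spectrumOn (K.prod H) (offDiag B' B) = spectrumOn (H.prod K) (offDiag B B') := by
  rw [offDiag_swap, spectrumOn_conj (H := H.prod K) _ fun _ => and_comm]

lemma eq_zero_of_zero_notMem_pointSpectrumOn_offDiag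
    (h : (0 : 𝕜) ∉ pointSpectrumOn (H.prod K) (offDiag B B')) : ∀ u ∈ H, B u = 0 → u = 0 := by
  intro u hu hBu
  by_contra hu0
  exact h ⟨(u, 0), ⟨hu, K.zero_mem⟩, by simpa using hu0, by simp [offDiag_apply, hBu]⟩

/-- `B' B + 1` maps its natural domain `{x ∈ H | B x ∈ K, B' (B x) ∈ H}` onto `H`. -/
def CompAddOneSurjOn (H : Submodule 𝕜 E) (K : Submodule 𝕜 F) (B : E →ₗ[𝕜] F)
    (B' : F →ₗ[𝕜] E) : Prop :=
  ∀ y ∈ H, ∃ x ∈ H, B x ∈ K ∧ B' (B x) + x = y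

lemma CompAddOneSurjOn.apply_mem (hsurj : CompAddOneSurjOn H K B B')
    (hinj : ∀ u ∈ H, B' (B u) = -u → u = 0) : ∀ x ∈ H, B' (B x) ∈ H → B x ∈ K := by
  intro x hx hBBx
  obtain ⟨x', hx', hBx', he⟩ := hsurj _ (H.add_mem hBBx hx)
  have hsub : x - x' = 0 := hinj _ (H.sub_mem hx hx') <| by
    rw [map_sub, map_sub, eq_sub_of_add_eq he]
    abel
  rwa [sub_eq_zero.1 hsub]

lemma pointSpectrumOn_offDiag (hdom : ∀ x ∈ H, B' (B x) ∈ H → B x ∈ K)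
    (hker' : ∀ v ∈ K, B' v = 0 → v = 0) :
    pointSpectrumOn (H.prod K) (offDiag B B') = (· ^ 2) ⁻¹' pointSpectrumOn H (B' ∘ₗ B) := by
  ext l
  constructor
  · rintro ⟨⟨u, v⟩, ⟨hu, hv⟩, h0, he⟩
    obtain ⟨hB'v, hBu⟩ : B' v = l • u ∧ B u = l • v := Prod.ext_iff.1 he
    refine ⟨u, hu, ?_, by simp [hBu, hB'v, smul_smul, pow_two]⟩
    rintro rfl
    exact h0 (Prod.ext rfl (hker' v hv (by simpa using hB'v)))
  · rintro ⟨x, hx, hx0, he⟩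
    replace he : B' (B x) = l ^ 2 • x := he
    have hBx : B x ∈ K := hdom x hx (he ▸ H.smul_mem _ hx)
    by_cases hzero : l • x = 0 ∧ B x = 0
    · exact ⟨(x, 0), ⟨hx, K.zero_mem⟩, by simpa using hx0, by simp [offDiag_apply, hzero]⟩
    · exact ⟨(l • x, B x), ⟨H.smul_mem l hx, hBx⟩, by simpa using hzero,
        by simp [offDiag_apply, he, smul_smul, pow_two]⟩

lemma exists_comp_sub_sq_smul_eq {l : 𝕜}
    (h : ∀ y ∈ H.prod K, ∃ x ∈ H.prod K, offDiag B B' x - l • x = y) :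
    ∀ p ∈ H, ∃ x ∈ H, B' (B x) - l ^ 2 • x = p := by
  intro p hp
  obtain ⟨⟨u, v⟩, ⟨hu, hv⟩, he⟩ := h (p, 0) ⟨hp, K.zero_mem⟩
  obtain ⟨h1, h2⟩ : B' v - l • u = p ∧ B u - l • v = 0 := Prod.ext_iff.1 he
  rcases eq_or_ne l 0 with rfl | hl
  · obtain ⟨⟨x, w⟩, ⟨hx, -⟩, he'⟩ := h (0, v) ⟨H.zero_mem, hv⟩
    have hBx : B x - (0 : 𝕜) • w = v := congrArg Prod.snd he'
    rw [zero_smul, sub_zero] at h1 hBx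
    exact ⟨x, hx, by simp [hBx, h1]⟩
  · refine ⟨l⁻¹ • u, H.smul_mem _ hu, ?_⟩
    rw [map_smul, sub_eq_zero.1 h2, inv_smul_smul₀ hl, ← h1, smul_smul, pow_two,
      mul_inv_cancel_right₀ hl]

/-- Writing `C` for the off-diagonal operator, `(C - l) ψ = (p, 0)` is solved by
`ψ = (C + l) (x, 0)` with `(B' B - l²) x = p`. The equation `(C - l) ψ = (0, q)` is solved after
writing `q = (B B' + 1) w`, which moves the problem into the domain of `B'`. -/
lemma exists_offDiag_sub_smul_eq {l : 𝕜} (hdom : ∀ x ∈ H, B' (B x) ∈ H → B x ∈ K)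
    (hker' : ∀ v ∈ K, B' v = 0 → v = 0) (hsurj' : CompAddOneSurjOn K H B' B)
    (h : ∀ p ∈ H, ∃ x ∈ H, B' (B x) - l ^ 2 • x = p) :
    ∀ y ∈ H.prod K, ∃ x ∈ H.prod K, offDiag B B' x - l • x = y := by
  have solve : ∀ p ∈ H, ∃ x ∈ H, B x ∈ K ∧ B' (B x) = l ^ 2 • x + p := by
    intro p hp
    obtain ⟨x, hx, he⟩ := h p hp
    rw [sub_eq_iff_eq_add'] at he
    exact ⟨x, hx, hdom x hx (he ▸ H.add_mem (H.smul_mem _ hx) hp), he⟩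
  rintro ⟨p, q⟩ ⟨hp, hq⟩
  obtain ⟨x, hx, hBx, hBBx⟩ := solve p hp
  obtain ⟨w, hw, hB'w, rfl⟩ := hsurj' q hq
  obtain ⟨t, ht, hBt, hBBt⟩ := solve (B' w) hB'w
  obtain ⟨z, hz, hlz, hB'z⟩ : ∃ z ∈ K, l • z = B t - w ∧ B' z = l • t := by
    have hB' : B' (B t - w) = l ^ 2 • t := by rw [map_sub, hBBt, add_sub_cancel_right]
    have hmem : B t - w ∈ K := K.sub_mem hBt hw
    rcases eq_or_ne l 0 with rfl | hl
    · exact ⟨0, K.zero_mem, by simp [hker' _ hmem (by simpa using hB')], by simp⟩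
    · refine ⟨l⁻¹ • (B t - w), K.smul_mem _ hmem, smul_inv_smul₀ hl _, ?_⟩
      rw [map_smul, hB', pow_two, mul_smul, inv_smul_smul₀ hl]
  refine ⟨(l • x + (B' w + (1 + l ^ 2) • t), B x + (l • w + (1 + l ^ 2) • z)),
    ⟨H.add_mem (H.smul_mem _ hx) (H.add_mem hB'w (H.smul_mem _ ht)),
      K.add_mem hBx (K.add_mem (K.smul_mem _ hw) (K.smul_mem _ hz))⟩, Prod.ext ?_ ?_⟩
  · simp only [offDiag_apply, map_add, map_smul, hBBx, hB'z, Prod.fst_sub, Prod.smul_fst]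
    module
  · have hBt' : B t = l • z + w := eq_add_of_sub_eq hlz.symm
    simp only [offDiag_apply, map_add, map_smul, hBt', Prod.snd_sub, Prod.smul_snd]
    module

lemma spectrumOn_offDiag (hdom : ∀ x ∈ H, B' (B x) ∈ H → B x ∈ K)
    (hker' : ∀ v ∈ K, B' v = 0 → v = 0) (hsurj' : CompAddOneSurjOn K H B' B) :
    spectrumOn (H.prod K) (offDiag B B') = (· ^ 2) ⁻¹' spectrumOn H (B' ∘ₗ B) := by
  rw [spectrumOn, spectrumOn, Set.preimage_union, pointSpectrumOn_offDiag hdom hker']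
  congr 1
  ext l
  exact not_congr ⟨exists_comp_sub_sq_smul_eq, exists_offDiag_sub_smul_eq hdom hker' hsurj'⟩

end SpectrumOn

/-! ### Square-summable sequences -/

/-- The space `ℓ²` as a submodule of the space of all complex sequences, the carrier on which the
formal operators act. -/
def ell2 : Submodule ℂ (ℕ → ℂ) where
  carrier := {x | Memℓp x 2}
  zero_mem' := zero_memℓp
  add_mem' := Memℓp.add
  smul_mem' c _ hx := hx.const_smul c

lemma mem_ell2_iff_summable {x : ℕ → ℂ} : x ∈ ell2 ↔ Summable fun n => ‖x n‖ ^ 2 := by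
  change Memℓp x 2 ↔ _
  simpa using memℓp_gen_iff (p := 2) (f := x) (by norm_num)

lemma memL2w_one_iff {x : ℕ → ℂ} : MemL2w (fun _ => 1) x ↔ x ∈ ell2 := by
  simp [MemL2w, mem_ell2_iff_summable]

lemma mem_domW_one_iff {T : (ℕ → ℂ) → ℕ → ℂ} {x : ℕ → ℂ} :
    x ∈ DomW (fun _ => 1) T ↔ x ∈ ell2 ∧ T x ∈ ell2 :=
  and_congr memL2w_one_iff memL2w_one_iff

lemma inner_eq_innerW_one (f g : lp (fun _ : ℕ => ℂ) 2) :
    inner ℂ f g = innerW (fun _ => 1) f g := by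
  simp [lp.inner_eq_tsum, innerW, mul_comm]

lemma star_innerW (w : ℕ → ℝ) (f g : ℕ → ℂ) : star (innerW w f g) = innerW w g f := by
  rw [innerW, innerW, tsum_star]
  refine tsum_congr fun n => ?_
  simp only [star_mul', Complex.star_def, Complex.conj_ofReal, Complex.conj_conj]
  ring

lemma eigenW_one (T : (ℕ → ℂ) →ₗ[ℂ] ℕ → ℂ) :
    eigenW (fun _ => 1) T = pointSpectrumOn ell2 T := by
  ext l
  refine exists_congr fun x => ?_
  rw [mem_domW_one_iff]
  exact ⟨fun ⟨hx, h0, he⟩ => ⟨hx.1, h0, he⟩,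
    fun ⟨hx, h0, he⟩ => ⟨⟨hx, he ▸ ell2.smul_mem l hx⟩, h0, he⟩⟩

lemma spectrumW_one (T : (ℕ → ℂ) →ₗ[ℂ] ℕ → ℂ) :
    spectrumW (fun _ => 1) T = spectrumOn ell2 T := by
  have hrange (l : ℂ) : (∀ y, MemL2w (fun _ => 1) y →
        ∃ x ∈ DomW (fun _ => 1) T, (fun n => T x n - l * x n) = y) ↔
      ∀ y ∈ ell2, ∃ x ∈ ell2, T x - l • x = y := by
    simp only [memL2w_one_iff, mem_domW_one_iff]
    refine forall₂_congr fun y hy => exists_congr fun x => and_congr_left fun he => ?_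
    have hTx : T x = y + l • x := eq_add_of_sub_eq he
    exact and_iff_left_of_imp fun hx => hTx ▸ ell2.add_mem hy (ell2.smul_mem l hx)
  ext l
  rw [spectrumOn, ← eigenW_one]
  simp only [spectrumW, hrange, not_and_or, eigenW, Set.mem_union, Set.mem_ofPred_eq]
  refine or_congr_left ?_
  push Not
  exact exists_congr fun x => and_congr_right fun _ => and_comm

lemma isSelfAdjointW_one_iff (T : (ℕ → ℂ) → ℕ → ℂ) :
    IsSelfAdjointW (fun _ => 1) T ↔
      IsSelfAdjointGraph ℂ {p : lp (fun _ : ℕ => ℂ) 2 × lp (fun _ : ℕ => ℂ) 2 | T p.1 = p.2} := by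
  have hadj (y z : lp (fun _ : ℕ => ℂ) 2) :
      (∀ x ∈ DomW (fun _ => 1) T, innerW (fun _ => 1) (T x) y = innerW (fun _ => 1) x z) ↔
        ∀ p : lp (fun _ : ℕ => ℂ) 2 × lp (fun _ : ℕ => ℂ) 2, T p.1 = p.2 →
          inner ℂ p.2 y = inner ℂ p.1 z := by
    simp only [inner_eq_innerW_one, mem_domW_one_iff]
    constructor
    · intro h p hp
      rw [← hp]
      exact h _ ⟨lp.memℓp p.1, hp ▸ lp.memℓp p.2⟩
    · exact fun h x ⟨hx, hTx⟩ => h (⟨x, hx⟩, ⟨T x, hTx⟩) rfl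
  constructor
  · intro h y z
    refine (hadj y z).symm.trans ((h y z (memL2w_one_iff.2 (lp.memℓp y))
      (memL2w_one_iff.2 (lp.memℓp z))).trans ⟨And.right, fun hyz => ⟨?_, hyz⟩⟩)
    exact mem_domW_one_iff.2 ⟨lp.memℓp y, hyz ▸ lp.memℓp z⟩
  · intro h y z hy hz
    rw [memL2w_one_iff] at hy hz
    refine (hadj ⟨y, hy⟩ ⟨z, hz⟩).trans ((h ⟨y, hy⟩ ⟨z, hz⟩).trans
      ⟨fun hyz => ⟨?_, hyz⟩, And.right⟩)
    exact mem_domW_one_iff.2 ⟨hy, hyz ▸ hz⟩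

/-- `B` and `B'` are formally adjoint to each other on their maximal domains in `ℓ²`. -/
def IsFormalAdjoint (B B' : (ℕ → ℂ) → ℕ → ℂ) : Prop :=
  ∀ u ∈ ell2, ∀ v ∈ ell2, B u ∈ ell2 → B' v ∈ ell2 →
    innerW (fun _ => 1) (B u) v = innerW (fun _ => 1) u (B' v)

lemma IsFormalAdjoint.symm {B B' : (ℕ → ℂ) → ℕ → ℂ} (h : IsFormalAdjoint B B') :
    IsFormalAdjoint B' B := fun v hv u hu hv' hu' => by
  rw [← star_innerW, ← h u hu v hv hu' hv', star_innerW]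

lemma IsSelfAdjointW.isFormalAdjoint {T : (ℕ → ℂ) → ℕ → ℂ}
    (hT : IsSelfAdjointW (fun _ => 1) T) : IsFormalAdjoint T T := by
  intro x hx y hy hTx hTy
  exact (hT y (T y) (memL2w_one_iff.2 hy) (memL2w_one_iff.2 hTy)).2
    ⟨mem_domW_one_iff.2 ⟨hy, hTy⟩, rfl⟩ x (mem_domW_one_iff.2 ⟨hx, hTx⟩)

lemma IsSelfAdjointW.compAddOneSurjOn {T : (ℕ → ℂ) →ₗ[ℂ] ℕ → ℂ}
    (hT : IsSelfAdjointW (fun _ => 1) T) : CompAddOneSurjOn ell2 ell2 T T := by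
  intro y hy
  obtain ⟨x, z, hxz, hz⟩ := ((isSelfAdjointW_one_iff T).1 hT).exists_mem_mem_sub ⟨y, hy⟩
  have hxz' : T x = z := hxz
  have hz' : T z = y - x := hz
  exact ⟨x, lp.memℓp x, hxz' ▸ lp.memℓp z, by rw [hxz', hz', sub_add_cancel]⟩

lemma IsFormalAdjoint.isSelfAdjointW_comp {B B' : (ℕ → ℂ) →ₗ[ℂ] ℕ → ℂ}
    (hB : IsFormalAdjoint B B') (hdom : ∀ x ∈ ell2, B' (B x) ∈ ell2 → B x ∈ ell2)
    (hsurj : CompAddOneSurjOn ell2 ell2 B B') : IsSelfAdjointW (fun _ => 1) (B' ∘ₗ B) := by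
  refine (isSelfAdjointW_one_iff _).2 (isSelfAdjointGraph_of_symm_of_surj ?_ ?_)
  · rintro ⟨x, x'⟩ (hx : B' (B x) = x') ⟨y, y'⟩ (hy : B' (B y) = y')
    have hx' : B' (B x) ∈ ell2 := hx ▸ lp.memℓp x'
    have hy' : B' (B y) ∈ ell2 := hy ▸ lp.memℓp y'
    have hBx := hdom x (lp.memℓp x) hx'
    have hBy := hdom y (lp.memℓp y) hy'
    simp only [inner_eq_innerW_one]
    rw [← hx, ← hy, ← hB x (lp.memℓp x) _ hBy hBx hy', hB.symm _ hBx _ (lp.memℓp y) hx' hBy]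
  · rintro ⟨y, hy⟩
    obtain ⟨x, hx, -, rfl⟩ := hsurj y hy
    have hBBx : B' (B x) ∈ ell2 := by simpa using ell2.sub_mem hy hx
    exact ⟨(⟨x, hx⟩, ⟨B' (B x), hBBx⟩), rfl, rfl⟩

/-! ### The even and odd parts of a sequence -/

@[simp] lemma evenEmbed_two_mul (x : ℕ → ℂ) (n : ℕ) : evenEmbed x (2 * n) = x n := by
  simp [evenEmbed]

@[simp] lemma evenEmbed_two_mul_add_one (x : ℕ → ℂ) (n : ℕ) : evenEmbed x (2 * n + 1) = 0 := by
  simp [evenEmbed]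

@[simp] lemma oddEmbed_two_mul (x : ℕ → ℂ) (n : ℕ) : oddEmbed x (2 * n) = 0 := by
  simp [oddEmbed]

@[simp] lemma oddEmbed_two_mul_add_one (x : ℕ → ℂ) (n : ℕ) : oddEmbed x (2 * n + 1) = x n := by
  simp [oddEmbed, show (2 * n + 1) / 2 = n by omega]

lemma eq_of_even_of_odd {x y : ℕ → ℂ} (heven : ∀ n, x (2 * n) = y (2 * n))
    (hodd : ∀ n, x (2 * n + 1) = y (2 * n + 1)) : x = y := by
  funext n
  obtain ⟨k, rfl | rfl⟩ := Nat.even_or_odd' n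
  exacts [heven k, hodd k]

lemma innerW_evenEmbed (x y : ℕ → ℂ) :
    innerW (fun _ => 1) (evenEmbed x) (evenEmbed y) = innerW (fun _ => 1) x y := by
  rw [innerW, ← (mul_right_injective₀ (two_ne_zero' ℕ)).tsum_eq]
  · simp only [evenEmbed_two_mul, innerW]
  · intro n hn
    obtain ⟨k, rfl | rfl⟩ := Nat.even_or_odd' n
    exacts [⟨k, rfl⟩, absurd (by simp) hn]

lemma innerW_oddEmbed (x y : ℕ → ℂ) :
    innerW (fun _ => 1) (oddEmbed x) (oddEmbed y) = innerW (fun _ => 1) x y := by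
  rw [innerW, ← (show Function.Injective fun n : ℕ => 2 * n + 1 by
    intro m n; simp).tsum_eq]
  · simp only [oddEmbed_two_mul_add_one, innerW]
  · intro n hn
    obtain ⟨k, rfl | rfl⟩ := Nat.even_or_odd' n
    exacts [absurd (by simp) hn, ⟨k, rfl⟩]

/-- The identification of pairs of sequences with sequences, `(u, v) ↦ (u₀, v₀, u₁, v₁, …)`. -/
def interleave : ((ℕ → ℂ) × (ℕ → ℂ)) ≃ₗ[ℂ] (ℕ → ℂ) where
  toFun p := evenEmbed p.1 + oddEmbed p.2
  invFun x := (fun n => x (2 * n), fun n => x (2 * n + 1))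
  map_add' p q := eq_of_even_of_odd (by simp) (by simp)
  map_smul' c p := eq_of_even_of_odd (by simp) (by simp)
  left_inv p := by simp
  right_inv x := eq_of_even_of_odd (by simp) (by simp)

lemma interleave_two_mul (p : (ℕ → ℂ) × (ℕ → ℂ)) (n : ℕ) : interleave p (2 * n) = p.1 n :=
  congrFun (congrArg Prod.fst (interleave.symm_apply_apply p)) n

lemma interleave_two_mul_add_one (p : (ℕ → ℂ) × (ℕ → ℂ)) (n : ℕ) :
    interleave p (2 * n + 1) = p.2 n :=
  congrFun (congrArg Prod.snd (interleave.symm_apply_apply p)) n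

lemma interleave_zero_right (u : ℕ → ℂ) : interleave (u, 0) = evenEmbed u := by
  funext n
  simp [interleave, oddEmbed]

lemma interleave_zero_left (v : ℕ → ℂ) : interleave (0, v) = oddEmbed v := by
  funext n
  simp [interleave, evenEmbed]

lemma interleave_mem_ell2_iff (p : (ℕ → ℂ) × (ℕ → ℂ)) :
    interleave p ∈ ell2 ↔ p ∈ ell2.prod ell2 := by
  simp only [Submodule.mem_prod, mem_ell2_iff_summable]
  constructor
  · intro h
    have heven := h.comp_injective (i := fun n : ℕ => 2 * n) fun m n => by simp
    have hodd := h.comp_injective (i := fun n : ℕ => 2 * n + 1) fun m n => by simp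
    simp only [Function.comp_def, interleave_two_mul, interleave_two_mul_add_one] at heven hodd
    exact ⟨heven, hodd⟩
  · rintro ⟨hu, hv⟩
    refine Summable.even_add_odd ?_ ?_
    · simpa only [interleave_two_mul] using hu
    · simpa only [interleave_two_mul_add_one] using hv

lemma evenEmbed_mem_ell2_iff {u : ℕ → ℂ} : evenEmbed u ∈ ell2 ↔ u ∈ ell2 := by
  rw [← interleave_zero_right, interleave_mem_ell2_iff]
  exact and_iff_left ell2.zero_mem

lemma oddEmbed_mem_ell2_iff {v : ℕ → ℂ} : oddEmbed v ∈ ell2 ↔ v ∈ ell2 := by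
  rw [← interleave_zero_left, interleave_mem_ell2_iff]
  exact and_iff_right ell2.zero_mem

/-! ### The two blocks of a Jacobi matrix with zero diagonal -/

/-- The block of the Jacobi matrix with weights `a` and zero diagonal that maps even parts to odd
parts. -/
def evenToOdd (a : ℕ → ℝ) : (ℕ → ℂ) →ₗ[ℂ] ℕ → ℂ where
  toFun u n := a (2 * n) * u n + a (2 * n + 1) * u (n + 1)
  map_add' u v := by
    funext n
    simp only [Pi.add_apply]
    ring
  map_smul' c u := by
    funext n
    simp only [Pi.smul_apply, smul_eq_mul, RingHom.id_apply]
    ring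

/-- The block of the Jacobi matrix with weights `a` and zero diagonal that maps odd parts to even
parts. -/
def oddToEven (a : ℕ → ℝ) : (ℕ → ℂ) →ₗ[ℂ] ℕ → ℂ where
  toFun v
    | 0 => a 0 * v 0
    | n + 1 => a (2 * n + 1) * v n + a (2 * n + 2) * v (n + 1)
  map_add' u v := by
    funext n
    cases n <;> simp only [Pi.add_apply] <;> ring
  map_smul' c v := by
    funext n
    cases n <;> simp only [Pi.smul_apply, smul_eq_mul, RingHom.id_apply] <;> ring

section Blocks

variable (a : ℕ → ℝ)

lemma evenToOdd_apply (u : ℕ → ℂ) (n : ℕ) :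
    evenToOdd a u n = a (2 * n) * u n + a (2 * n + 1) * u (n + 1) := rfl

lemma oddToEven_zero (v : ℕ → ℂ) : oddToEven a v 0 = a 0 * v 0 := rfl

lemma oddToEven_succ (v : ℕ → ℂ) (n : ℕ) :
    oddToEven a v (n + 1) = a (2 * n + 1) * v n + a (2 * n + 2) * v (n + 1) := rfl

lemma jacobiAct_interleave (p : (ℕ → ℂ) × (ℕ → ℂ)) :
    jacobiAct a (fun _ => 0) (interleave p)
      = interleave (offDiag (evenToOdd a) (oddToEven a) p) := by
  refine eq_of_even_of_odd (fun n => ?_) fun n => ?_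
  · rw [interleave_two_mul, offDiag_apply]
    cases n with
    | zero => simp [jacobiAct, oddToEven_zero, ← interleave_two_mul_add_one]
    | succ n => simp [jacobiAct, oddToEven_succ, ← interleave_two_mul_add_one, mul_add]
  · rw [interleave_two_mul_add_one, offDiag_apply]
    simp [jacobiAct, evenToOdd_apply, ← interleave_two_mul, mul_add]

lemma jacobiAct_zero_diagonal :
    jacobiAct a (fun _ => 0) = interleave.conj (offDiag (evenToOdd a) (oddToEven a)) := by
  refine funext <| interleave.surjective.forall.2 fun p => ?_
  rw [jacobiAct_interleave, LinearEquiv.conj_apply_apply, LinearEquiv.symm_apply_apply]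

lemma jacobiAct_evenEmbed (u : ℕ → ℂ) :
    jacobiAct a (fun _ => 0) (evenEmbed u) = oddEmbed (evenToOdd a u) := by
  rw [← interleave_zero_right, jacobiAct_interleave, offDiag_apply, map_zero,
    interleave_zero_left]

lemma jacobiAct_oddEmbed (v : ℕ → ℂ) :
    jacobiAct a (fun _ => 0) (oddEmbed v) = evenEmbed (oddToEven a v) := by
  rw [← interleave_zero_left, jacobiAct_interleave, offDiag_apply, map_zero,
    interleave_zero_right]

lemma eigenW_zero_diagonal : eigenW (fun _ => 1) (jacobiAct a fun _ => 0)
    = pointSpectrumOn (ell2.prod ell2) (offDiag (evenToOdd a) (oddToEven a)) := by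
  rw [jacobiAct_zero_diagonal, eigenW_one, pointSpectrumOn_conj _ interleave_mem_ell2_iff]

lemma spectrumW_zero_diagonal : spectrumW (fun _ => 1) (jacobiAct a fun _ => 0)
    = spectrumOn (ell2.prod ell2) (offDiag (evenToOdd a) (oddToEven a)) := by
  rw [jacobiAct_zero_diagonal, spectrumW_one, spectrumOn_conj _ interleave_mem_ell2_iff]

variable {a}

lemma jacobiAct_eq_oddToEven_comp_evenToOdd {ae be : ℕ → ℝ}
    (hae : ∀ n, ae n = a (2 * n) * a (2 * n + 1))
    (hbe : ∀ n, be n = (if n = 0 then 0 else a (2 * n - 1) ^ 2) + a (2 * n) ^ 2) :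
    jacobiAct ae be = oddToEven a ∘ₗ evenToOdd a := by
  funext x n
  rw [LinearMap.comp_apply]
  cases n with
  | zero =>
    simp only [jacobiAct, oddToEven_zero, evenToOdd_apply, hae, hbe, if_true]
    push_cast
    ring
  | succ n =>
    simp only [jacobiAct, oddToEven_succ, evenToOdd_apply, hae, hbe, n.succ_ne_zero, if_false,
      show 2 * (n + 1) = 2 * n + 2 by ring, Nat.add_one_sub_one]
    push_cast
    ring

lemma jacobiAct_eq_evenToOdd_comp_oddToEven {ao bo : ℕ → ℝ}
    (hao : ∀ n, ao n = a (2 * n + 1) * a (2 * n + 2))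
    (hbo : ∀ n, bo n = a (2 * n) ^ 2 + a (2 * n + 1) ^ 2) :
    jacobiAct ao bo = evenToOdd a ∘ₗ oddToEven a := by
  funext x n
  rw [LinearMap.comp_apply]
  cases n <;>
  · simp only [jacobiAct, oddToEven_zero, oddToEven_succ, evenToOdd_apply, hao, hbo,
      show ∀ n, 2 * (n + 1) = 2 * n + 2 from fun n => by ring]
    push_cast
    ring

lemma IsSelfAdjointW.isFormalAdjoint_evenToOdd
    (hsa : IsSelfAdjointW (fun _ => 1) (jacobiAct a fun _ => 0)) :
    IsFormalAdjoint (evenToOdd a) (oddToEven a) := by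
  intro u hu v hv hBu hBv
  have h := hsa.isFormalAdjoint (evenEmbed u) (evenEmbed_mem_ell2_iff.2 hu) (oddEmbed v)
    (oddEmbed_mem_ell2_iff.2 hv) (by rwa [jacobiAct_evenEmbed, oddEmbed_mem_ell2_iff])
    (by rwa [jacobiAct_oddEmbed, evenEmbed_mem_ell2_iff])
  rwa [jacobiAct_evenEmbed, jacobiAct_oddEmbed, innerW_oddEmbed, innerW_evenEmbed] at h

lemma IsSelfAdjointW.compAddOneSurjOn_blocks
    (hsa : IsSelfAdjointW (fun _ => 1) (jacobiAct a fun _ => 0)) :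
    CompAddOneSurjOn ell2 ell2 (evenToOdd a) (oddToEven a) ∧
      CompAddOneSurjOn ell2 ell2 (oddToEven a) (evenToOdd a) := by
  have hsolve : ∀ y ∈ ell2.prod ell2, ∃ x ∈ ell2.prod ell2,
      offDiag (evenToOdd a) (oddToEven a) x ∈ ell2.prod ell2 ∧
      offDiag (evenToOdd a) (oddToEven a) (offDiag (evenToOdd a) (oddToEven a) x) + x = y := by
    intro y hy
    rw [jacobiAct_zero_diagonal] at hsa
    obtain ⟨x, hx, hCx, he⟩ := hsa.compAddOneSurjOn _ ((interleave_mem_ell2_iff y).2 hy)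
    obtain ⟨x, rfl⟩ := interleave.surjective x
    simp only [LinearEquiv.conj_apply_apply, LinearEquiv.symm_apply_apply,
      interleave_mem_ell2_iff, ← map_add, interleave.injective.eq_iff] at hx hCx he
    exact ⟨x, hx, hCx, he⟩
  constructor
  · intro p hp
    obtain ⟨x, hx, hCx, he⟩ := hsolve (p, 0) ⟨hp, ell2.zero_mem⟩
    exact ⟨x.1, hx.1, hCx.2, congrArg Prod.fst he⟩
  · intro q hq
    obtain ⟨x, hx, hCx, he⟩ := hsolve (0, q) ⟨ell2.zero_mem, hq⟩
    exact ⟨x.2, hx.2, hCx.1, congrArg Prod.snd he⟩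

end Blocks

/-! ### Square-summable solutions of the block equations -/

section Decay

variable {a : ℕ → ℝ}

/-- The sequence annihilated by `evenToOdd a`, normalised to start with `1`. -/
def kernelSeq (a : ℕ → ℝ) (n : ℕ) : ℝ :=
  ∏ k ∈ Finset.range n, -(a (2 * k) / a (2 * k + 1))

lemma evenToOdd_kernelSeq_mul (ha : ∀ n, a n ≠ 0) (c : ℂ) :
    evenToOdd a (fun n => kernelSeq a n * c) = 0 := by
  funext n
  have h : (a (2 * n + 1) : ℂ) ≠ 0 := Complex.ofReal_ne_zero.2 (ha _)
  simp only [evenToOdd_apply, kernelSeq, Finset.prod_range_succ, Complex.ofReal_mul,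
    Complex.ofReal_neg, Complex.ofReal_div, Pi.zero_apply]
  field_simp
  ring

variable {d : ℕ → ℝ} {u : ℕ → ℂ}

lemma conj_mul_evenToOdd_zero
    (hu : ∀ n, oddToEven a (evenToOdd a u) n = -(d n * u n)) :
    (a 0 : ℂ) * (star (u 0) * evenToOdd a u 0) = -(d 0 * ‖u 0‖ ^ 2 : ℝ) := by
  have h := hu 0
  rw [oddToEven_zero] at h
  push_cast
  rw [← Complex.conj_mul', mul_left_comm, h, Complex.star_def]
  ring

lemma conj_mul_evenToOdd_succ
    (hu : ∀ n, oddToEven a (evenToOdd a u) n = -(d n * u n)) (n : ℕ) :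
    (a (2 * n + 2) : ℂ) * (star (u (n + 1)) * evenToOdd a u (n + 1))
      = a (2 * n) * (star (u n) * evenToOdd a u n)
        - (‖evenToOdd a u n‖ ^ 2 + d (n + 1) * ‖u (n + 1)‖ ^ 2 : ℝ) := by
  have h := hu (n + 1)
  rw [oddToEven_succ] at h
  have hconj := congrArg star (evenToOdd_apply a u n)
  simp only [star_add, star_mul', Complex.star_def, Complex.conj_ofReal] at hconj ⊢
  push_cast
  rw [← Complex.conj_mul', ← Complex.conj_mul']
  linear_combination starRingEnd ℂ (u (n + 1)) * h + evenToOdd a u n * hconj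

lemma re_conj_mul_evenToOdd_nonpos (hd : ∀ n, 0 ≤ d n)
    (hu : ∀ n, oddToEven a (evenToOdd a u) n = -(d n * u n)) (n : ℕ) :
    a (2 * n) * (star (u n) * evenToOdd a u n).re ≤ 0 := by
  induction n with
  | zero =>
    have h := congrArg Complex.re (conj_mul_evenToOdd_zero hu)
    rw [Complex.re_ofReal_mul, ← Complex.ofReal_neg, Complex.ofReal_re] at h
    exact h.trans_le (neg_nonpos.2 (mul_nonneg (hd 0) (sq_nonneg _)))
  | succ n ih =>
    have h := congrArg Complex.re (conj_mul_evenToOdd_succ hu n)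
    rw [Complex.re_ofReal_mul, Complex.sub_re, Complex.re_ofReal_mul, Complex.ofReal_re] at h
    refine h.trans_le (sub_nonpos.2 (ih.trans ?_))
    exact add_nonneg (sq_nonneg _) (mul_nonneg (hd _) (sq_nonneg _))

lemma norm_mul_le_norm_mul_succ (hd : ∀ n, 0 ≤ d n)
    (hu : ∀ n, oddToEven a (evenToOdd a u) n = -(d n * u n)) (n : ℕ) :
    |a (2 * n)| * ‖u n‖ ≤ |a (2 * n + 1)| * ‖u (n + 1)‖ := by
  set v := evenToOdd a u n with hv
  set z := (a (2 * n) : ℂ) * u n with hz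
  have hinner : inner ℝ z v ≤ 0 := by
    have hre : inner ℝ z v = a (2 * n) * (star (u n) * v).re := by
      rw [Complex.inner, hz, map_mul, Complex.conj_ofReal, mul_left_comm, Complex.re_ofReal_mul,
        mul_comm v, Complex.star_def]
    exact hre.trans_le (re_conj_mul_evenToOdd_nonpos hd hu n)
  have hnorm : ‖z‖ ≤ ‖v - z‖ := by
    refine le_of_sq_le_sq ?_ (norm_nonneg _)
    rw [norm_sub_sq_real, real_inner_comm]
    nlinarith [sq_nonneg ‖v‖]
  have hsub : v - z = a (2 * n + 1) * u (n + 1) := by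
    rw [hv, hz, evenToOdd_apply, add_sub_cancel_left]
  rwa [hsub, hz, norm_mul, norm_mul, Complex.norm_real, Complex.norm_real] at hnorm

lemma kernelSeq_mul_norm_le (ha : ∀ n, a n ≠ 0) (hd : ∀ n, 0 ≤ d n)
    (hu : ∀ n, oddToEven a (evenToOdd a u) n = -(d n * u n)) (n : ℕ) :
    |kernelSeq a n| * ‖u 0‖ ≤ ‖u n‖ := by
  induction n with
  | zero => simp [kernelSeq]
  | succ n ih =>
    have hpos : 0 < |a (2 * n + 1)| := abs_pos.2 (ha _)
    calc |kernelSeq a (n + 1)| * ‖u 0‖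
        = |a (2 * n)| * (|kernelSeq a n| * ‖u 0‖) / |a (2 * n + 1)| := by
          rw [kernelSeq, Finset.prod_range_succ, ← kernelSeq, abs_mul, abs_neg, abs_div]
          ring
      _ ≤ |a (2 * n)| * ‖u n‖ / |a (2 * n + 1)| := by gcongr
      _ ≤ ‖u (n + 1)‖ := by
          rw [div_le_iff₀' hpos]
          exact norm_mul_le_norm_mul_succ hd hu n

lemma eq_zero_of_oddToEven_evenToOdd_of_apply_zero (ha : ∀ n, a n ≠ 0)
    (hu : ∀ n, oddToEven a (evenToOdd a u) n = -(d n * u n)) (h0 : u 0 = 0) : u = 0 := by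
  have hac (n : ℕ) : (a n : ℂ) ≠ 0 := Complex.ofReal_ne_zero.2 (ha n)
  suffices ∀ n, u n = 0 ∧ evenToOdd a u n = 0 from funext fun n => (this n).1
  intro n
  induction n with
  | zero => exact ⟨h0, by simpa [oddToEven_zero, h0, hac] using hu 0⟩
  | succ n ih =>
    have hun : u (n + 1) = 0 := by simpa [evenToOdd_apply, ih.1, hac] using ih.2
    refine ⟨hun, ?_⟩
    simpa only [oddToEven_succ, ih.2, hun, mul_zero, zero_add, neg_zero, mul_eq_zero, hac,
      false_or] using hu (n + 1)

/-- Since `u` grows at least as fast as `kernelSeq a`, square-summability of `u` would put the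
formal null vector of `evenToOdd a` into `ℓ²`. -/
lemma eq_zero_of_oddToEven_evenToOdd (ha : ∀ n, a n ≠ 0)
    (hker : ∀ x ∈ ell2, evenToOdd a x = 0 → x = 0) (hd : ∀ n, 0 ≤ d n) (hmem : u ∈ ell2)
    (hu : ∀ n, oddToEven a (evenToOdd a u) n = -(d n * u n)) : u = 0 := by
  have hkernel : (fun n => kernelSeq a n * u 0) ∈ ell2 := by
    rw [mem_ell2_iff_summable] at hmem ⊢
    refine hmem.of_nonneg_of_le (fun n => sq_nonneg _) fun n => ?_
    rw [norm_mul, Complex.norm_real, Real.norm_eq_abs]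
    gcongr
    exact kernelSeq_mul_norm_le ha hd hu n
  refine eq_zero_of_oddToEven_evenToOdd_of_apply_zero ha hu ?_
  simpa [kernelSeq] using congrFun (hker _ hkernel (evenToOdd_kernelSeq_mul ha _)) 0

/-- The square of `C` on the odd part is a nonnegative perturbation of the square, on the even
part, of the Jacobi matrix with shifted weights. -/
lemma evenToOdd_oddToEven_eq_shift (a : ℕ → ℝ) (u : ℕ → ℂ) (n : ℕ) :
    evenToOdd a (oddToEven a u) n
      = oddToEven (fun n => a (n + 1)) (evenToOdd (fun n => a (n + 1)) u) n
        + (if n = 0 then a 0 ^ 2 else 0 : ℝ) * u n := by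
  cases n with
  | zero =>
    simp only [evenToOdd_apply, oddToEven_zero, oddToEven_succ, if_true]
    push_cast
    ring
  | succ n =>
    simp only [evenToOdd_apply, oddToEven_succ, n.succ_ne_zero, if_false,
      show 2 * (n + 1) = 2 * n + 2 by ring]
    push_cast
    ring

lemma eq_zero_of_oddToEven_evenToOdd_eq_neg (ha : ∀ n, a n ≠ 0)
    (hker : ∀ x ∈ ell2, evenToOdd a x = 0 → x = 0) :
    ∀ u ∈ ell2, oddToEven a (evenToOdd a u) = -u → u = 0 := fun u hmem hu =>
  eq_zero_of_oddToEven_evenToOdd (d := 1) ha hker (fun _ => zero_le_one) hmem fun n => by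
    simp [hu]

lemma eq_zero_of_evenToOdd_oddToEven_eq_neg (ha : ∀ n, a n ≠ 0)
    (hker : ∀ x ∈ ell2, evenToOdd (fun n => a (n + 1)) x = 0 → x = 0) :
    ∀ u ∈ ell2, evenToOdd a (oddToEven a u) = -u → u = 0 := fun u hmem hu => by
  refine eq_zero_of_oddToEven_evenToOdd (d := fun n => 1 + if n = 0 then a 0 ^ 2 else 0)
    (fun n => ha (n + 1)) hker (fun n => by positivity) hmem fun n => ?_
  have h := evenToOdd_oddToEven_eq_shift a u n
  rw [hu, Pi.neg_apply] at h
  push_cast at h ⊢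
  linear_combination -h

end Decay

/-! ### Spectra of the squares -/

section Squares

variable {a : ℕ → ℝ}

lemma eq_zero_of_zero_notMem_eigenW (h0 : (0 : ℂ) ∉ eigenW (fun _ => 1) (jacobiAct a fun _ => 0)) :
    (∀ u ∈ ell2, evenToOdd a u = 0 → u = 0) ∧ ∀ v ∈ ell2, oddToEven a v = 0 → v = 0 := by
  rw [eigenW_zero_diagonal] at h0
  refine ⟨eq_zero_of_zero_notMem_pointSpectrumOn_offDiag h0, ?_⟩
  rw [← pointSpectrumOn_offDiag_swap] at h0
  exact eq_zero_of_zero_notMem_pointSpectrumOn_offDiag h0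

lemma evenToOdd_mem_ell2 (ha : ∀ n, a n ≠ 0)
    (hsa : IsSelfAdjointW (fun _ => 1) (jacobiAct a fun _ => 0))
    (h0 : (0 : ℂ) ∉ eigenW (fun _ => 1) (jacobiAct a fun _ => 0)) :
    ∀ u ∈ ell2, oddToEven a (evenToOdd a u) ∈ ell2 → evenToOdd a u ∈ ell2 :=
  hsa.compAddOneSurjOn_blocks.1.apply_mem
    (eq_zero_of_oddToEven_evenToOdd_eq_neg ha (eq_zero_of_zero_notMem_eigenW h0).1)

lemma oddToEven_mem_ell2 (ha : ∀ n, a n ≠ 0)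
    (hsa : IsSelfAdjointW (fun _ => 1) (jacobiAct a fun _ => 0))
    (h0' : (0 : ℂ) ∉ eigenW (fun _ => 1) (jacobiAct (fun n => a (n + 1)) fun _ => 0)) :
    ∀ v ∈ ell2, evenToOdd a (oddToEven a v) ∈ ell2 → oddToEven a v ∈ ell2 :=
  hsa.compAddOneSurjOn_blocks.2.apply_mem
    (eq_zero_of_evenToOdd_oddToEven_eq_neg ha (eq_zero_of_zero_notMem_eigenW h0').1)

lemma image_sq_preimage_sq {𝕜 : Type*} [Field 𝕜] [IsAlgClosed 𝕜] (S : Set 𝕜) :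
    (fun z => z ^ 2) '' ((fun z => z ^ 2) ⁻¹' S) = S :=
  Set.image_preimage_eq S fun z => IsAlgClosed.exists_pow_nat_eq z two_pos

end Squares

theorem jacobi_square_even_odd_restrictions_general
    (a : ℕ → ℝ) (ha : ∀ n, a n ≠ 0)
    (hsa : IsSelfAdjointW (fun _ => 1) (jacobiAct a fun _ => 0))
    (ae be ao bo : ℕ → ℝ)
    (hae : ∀ n, ae n = a (2 * n) * a (2 * n + 1))
    (hbe : ∀ n, be n = (if n = 0 then 0 else a (2 * n - 1) ^ 2) + a (2 * n) ^ 2)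
    (hao : ∀ n, ao n = a (2 * n + 1) * a (2 * n + 2))
    (hbo : ∀ n, bo n = a (2 * n) ^ 2 + a (2 * n + 1) ^ 2) :
    (∀ x : ℕ → ℂ,
        jacobiAct a (fun _ => 0) (jacobiAct a (fun _ => 0) (evenEmbed x))
          = evenEmbed (jacobiAct ae be x)) ∧
    (∀ x : ℕ → ℂ,
        jacobiAct a (fun _ => 0) (jacobiAct a (fun _ => 0) (oddEmbed x))
          = oddEmbed (jacobiAct ao bo x)) ∧
    ((0 : ℂ) ∉ eigenW (fun _ => 1) (jacobiAct a fun _ => 0) →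
      IsSelfAdjointW (fun _ => 1) (jacobiAct ae be) ∧
      spectrumW (fun _ => 1) (jacobiAct ae be)
        = (fun z => z ^ 2) '' spectrumW (fun _ => 1) (jacobiAct a fun _ => 0) ∧
      eigenW (fun _ => 1) (jacobiAct ae be)
        = (fun z => z ^ 2) '' eigenW (fun _ => 1) (jacobiAct a fun _ => 0)) ∧
    ((0 : ℂ) ∉ eigenW (fun _ => 1) (jacobiAct (fun n => a (n + 1)) fun _ => 0) →
      IsSelfAdjointW (fun _ => 1) (jacobiAct ao bo) ∧
      ((0 : ℂ) ∉ eigenW (fun _ => 1) (jacobiAct a fun _ => 0) →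
        spectrumW (fun _ => 1) (jacobiAct ao bo)
          = (fun z => z ^ 2) '' spectrumW (fun _ => 1) (jacobiAct a fun _ => 0) ∧
        eigenW (fun _ => 1) (jacobiAct ao bo)
          = (fun z => z ^ 2) '' eigenW (fun _ => 1) (jacobiAct a fun _ => 0))) := by
  rw [jacobiAct_eq_oddToEven_comp_evenToOdd hae hbe, jacobiAct_eq_evenToOdd_comp_oddToEven hao hbo]
  have hadj := hsa.isFormalAdjoint_evenToOdd
  obtain ⟨hsurj, hsurj'⟩ := hsa.compAddOneSurjOn_blocks
  refine ⟨fun x => ?_, fun x => ?_, fun h0 => ?_, fun h0' => ?_⟩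
  · rw [jacobiAct_evenEmbed, jacobiAct_oddEmbed, LinearMap.comp_apply]
  · rw [jacobiAct_oddEmbed, jacobiAct_evenEmbed, LinearMap.comp_apply]
  · have hdom := evenToOdd_mem_ell2 ha hsa h0
    have hker := (eq_zero_of_zero_notMem_eigenW h0).2
    refine ⟨hadj.isSelfAdjointW_comp hdom hsurj, ?_, ?_⟩
    · rw [spectrumW_zero_diagonal, spectrumW_one, spectrumOn_offDiag hdom hker hsurj',
        image_sq_preimage_sq]
    · rw [eigenW_zero_diagonal, eigenW_one, pointSpectrumOn_offDiag hdom hker,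
        image_sq_preimage_sq]
  · have hdom := oddToEven_mem_ell2 ha hsa h0'
    refine ⟨hadj.symm.isSelfAdjointW_comp hdom hsurj', fun h0 => ?_⟩
    have hker := (eq_zero_of_zero_notMem_eigenW h0).1
    constructor
    · rw [spectrumW_zero_diagonal, spectrumW_one, ← spectrumOn_offDiag_swap,
        spectrumOn_offDiag hdom hker hsurj, image_sq_preimage_sq]
    · rw [eigenW_zero_diagonal, eigenW_one, ← pointSpectrumOn_offDiag_swap,
        pointSpectrumOn_offDiag hdom hker, image_sq_preimage_sq]

/-- Proposition 3: for a self-adjoint Jacobi matrix `C` with zero diagonal, the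
restrictions of `C ∘ C` to the spans of the even (resp. odd) coordinate vectors are,
via the natural unitaries `evenEmbed`/`oddEmbed`, the Jacobi matrices with entries
`aₙᵉ = a₂ₙa₂ₙ₊₁`, `bₙᵉ = a₂ₙ₋₁² + a₂ₙ²` (with `a₋₁ = 0`) resp.
`aₙᵒ = a₂ₙ₊₁a₂ₙ₊₂`, `bₙᵒ = a₂ₙ² + a₂ₙ₊₁²`; moreover if `0` is not an eigenvalue of `C`
nor of the shifted matrix `C̃`, then both are self-adjoint and have spectrum
(resp. point spectrum) equal to the square of that of `C`. -/
theorem jacobi_square_even_odd_restrictions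
    (a : ℕ → ℝ) (ha : ∀ n, 0 < a n)
    (hsa : IsSelfAdjointW (fun _ => 1) (jacobiAct a fun _ => 0))
    (hsa' : IsSelfAdjointW (fun _ => 1) (jacobiAct (fun n => a (n + 1)) fun _ => 0))
    (ae be ao bo : ℕ → ℝ)
    (hae : ∀ n, ae n = a (2 * n) * a (2 * n + 1))
    (hbe : ∀ n, be n = (if n = 0 then 0 else a (2 * n - 1) ^ 2) + a (2 * n) ^ 2)
    (hao : ∀ n, ao n = a (2 * n + 1) * a (2 * n + 2))
    (hbo : ∀ n, bo n = a (2 * n) ^ 2 + a (2 * n + 1) ^ 2) :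
    (∀ x : ℕ → ℂ,
        jacobiAct a (fun _ => 0) (jacobiAct a (fun _ => 0) (evenEmbed x))
          = evenEmbed (jacobiAct ae be x)) ∧
    (∀ x : ℕ → ℂ,
        jacobiAct a (fun _ => 0) (jacobiAct a (fun _ => 0) (oddEmbed x))
          = oddEmbed (jacobiAct ao bo x)) ∧
    ((0 : ℂ) ∉ eigenW (fun _ => 1) (jacobiAct a fun _ => 0) →
      (0 : ℂ) ∉ eigenW (fun _ => 1) (jacobiAct (fun n => a (n + 1)) fun _ => 0) →
      IsSelfAdjointW (fun _ => 1) (jacobiAct ao bo) ∧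
      IsSelfAdjointW (fun _ => 1) (jacobiAct ae be) ∧
      spectrumW (fun _ => 1) (jacobiAct ao bo)
        = (fun z => z ^ 2) '' spectrumW (fun _ => 1) (jacobiAct a fun _ => 0) ∧
      spectrumW (fun _ => 1) (jacobiAct ae be)
        = (fun z => z ^ 2) '' spectrumW (fun _ => 1) (jacobiAct a fun _ => 0) ∧
      eigenW (fun _ => 1) (jacobiAct ao bo)
        = (fun z => z ^ 2) '' eigenW (fun _ => 1) (jacobiAct a fun _ => 0) ∧
      eigenW (fun _ => 1) (jacobiAct ae be)
        = (fun z => z ^ 2) '' eigenW (fun _ => 1) (jacobiAct a fun _ => 0)) := by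
  obtain ⟨heven, hodd, hspec, hspec'⟩ := jacobi_square_even_odd_restrictions_general a
    (fun n => (ha n).ne') hsa ae be ao bo hae hbe hao hbo
  exact ⟨heven, hodd, fun h0 h0' => ⟨(hspec' h0').1, (hspec h0).1, ((hspec' h0').2 h0).1,
    (hspec h0).2.1, ((hspec' h0').2 h0).2, (hspec h0).2.2⟩⟩
end
end

section
/- Let {a_n} be positive reals, {b_n} real, {α_n} positive reals, λ ∈ ℝ, and let {u_n} be a generalized eigenvector associated with λ. Set S_n = a_{n−1} α_{n−1} u_{n−1}² + a_n α_n u_n² − (λ − b_n) α_{n−1} u_{n−1} u_n and S̃_n = u_{n+1}² + u_n². Assume a_n → ∞, (α_{n−1}/α_n)(a_n/a_{n−1}) → 1, and limsup_{n→∞} |b_n|/a_n < 2. Then there exist constants c₁ > 0, c₂ > 0 and N ∈ ℕ such that for all n ≥ N: c₁ a_n α_n S̃_n ≤ S_n ≤ c₂ a_n α_n S̃_n. -/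
/-!
The recurrence at `n` eliminates `uₙ₋₁` from `Sₙ`: with `r = (αₙ₋₁ / αₙ) (aₙ / aₙ₋₁)` and
`t = (lam - bₙ) / aₙ`,
`Sₙ = aₙ αₙ (uₙ² + r uₙ₊₁² - r t uₙ uₙ₊₁)`.
By AM-GM, the bracket differs from `uₙ² + uₙ₊₁²` by at most `(|r - 1| + |r t| / 2) (uₙ² + uₙ₊₁²)`.
Since `r → 1` and, because `aₙ → ∞` makes `lam / aₙ` negligible, `limsup |t| < 2`, the factor
`|r - 1| + |r t| / 2` is eventually at most some `κ < 1`.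
-/

open Filter Topology

noncomputable section

/-- `u` is a generalized eigenvector of the Jacobi matrix `(a, b)` associated with `lam`:
`(u 0, u 1) ≠ (0, 0)` and `aₙ uₙ₊₁ = (lam − bₙ) uₙ − aₙ₋₁ uₙ₋₁` for all `n ≥ 1`. -/
def IsGenEig (a b : ℕ → ℝ) (lam : ℝ) (u : ℕ → ℝ) : Prop :=
  ¬(u 0 = 0 ∧ u 1 = 0) ∧
  ∀ n : ℕ, a (n + 1) * u (n + 2) = (lam - b (n + 1)) * u (n + 1) - a n * u n

/-- The quadratic form `Sₙ₊₁` in `(uₙ, uₙ₊₁)`, indexed so that no subtraction occurs. On a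
generalized eigenvector it is the weighted Turán determinant `aₙ₊₁ (αₙ₊₁ uₙ₊₁² - αₙ uₙ uₙ₊₂)`. -/
def turanForm (a b α : ℕ → ℝ) (lam : ℝ) (u : ℕ → ℝ) (n : ℕ) : ℝ :=
  a n * α n * u n ^ 2 + a (n + 1) * α (n + 1) * u (n + 1) ^ 2
    - (lam - b (n + 1)) * α n * u n * u (n + 1)

/-- The growth factor of `a` from `n` to `n + 1` relative to that of `α`; with the index shifted by
one, it is the ratio `(αₙ₋₁ / αₙ) (aₙ / aₙ₋₁)` of the paper. -/
def weightRatio (a α : ℕ → ℝ) (n : ℕ) : ℝ :=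
  α n / α (n + 1) * (a (n + 1) / a n)

lemma abs_quadForm_sub_sq_add_sq_le (r s x y : ℝ) :
    |x ^ 2 + r * y ^ 2 - s * x * y - (y ^ 2 + x ^ 2)| ≤ (|r - 1| + |s| / 2) * (y ^ 2 + x ^ 2) := by
  have amgm : 2 * |x * y| ≤ y ^ 2 + x ^ 2 := by
    simpa only [abs_mul, sq_abs, mul_assoc, add_comm] using two_mul_le_add_sq |x| |y|
  calc |x ^ 2 + r * y ^ 2 - s * x * y - (y ^ 2 + x ^ 2)|
      = |(r - 1) * y ^ 2 - s * (x * y)| := by ring_nf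
    _ ≤ |r - 1| * y ^ 2 + |s| / 2 * (2 * |x * y|) := by
        refine (abs_sub _ _).trans_eq ?_
        rw [abs_mul, abs_mul s, abs_sq]
        ring
    _ ≤ |r - 1| * (y ^ 2 + x ^ 2) + |s| / 2 * (y ^ 2 + x ^ 2) := by
        gcongr
        exact le_add_of_nonneg_right (sq_nonneg x)
    _ = (|r - 1| + |s| / 2) * (y ^ 2 + x ^ 2) := by ring

namespace IsGenEig

variable {a b α u : ℕ → ℝ} {lam : ℝ} {n : ℕ}

lemma turanForm_eq (hu : IsGenEig a b lam u) (ha : a n ≠ 0) (ha' : a (n + 1) ≠ 0)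
    (hα' : α (n + 1) ≠ 0) :
    turanForm a b α lam u n = a (n + 1) * α (n + 1) *
      (u (n + 1) ^ 2 + weightRatio a α n * u (n + 2) ^ 2
        - weightRatio a α n * ((lam - b (n + 1)) / a (n + 1)) * u (n + 1) * u (n + 2)) := by
  have hun : u n = ((lam - b (n + 1)) * u (n + 1) - a (n + 1) * u (n + 2)) / a n := by
    rw [eq_div_iff ha]
    linarith [hu.2 n]
  rw [turanForm, weightRatio, hun]
  field_simp
  ring

lemma abs_turanForm_sub_le (hu : IsGenEig a b lam u) (ha : a n ≠ 0) (ha' : 0 < a (n + 1))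
    (hα' : 0 < α (n + 1)) :
    |turanForm a b α lam u n - a (n + 1) * α (n + 1) * (u (n + 2) ^ 2 + u (n + 1) ^ 2)| ≤
      (|weightRatio a α n - 1| + |weightRatio a α n * ((lam - b (n + 1)) / a (n + 1))| / 2) *
        (a (n + 1) * α (n + 1) * (u (n + 2) ^ 2 + u (n + 1) ^ 2)) := by
  have hweight : 0 < a (n + 1) * α (n + 1) := mul_pos ha' hα'
  rw [hu.turanForm_eq ha ha'.ne' hα'.ne', ← mul_sub, abs_mul, abs_of_pos hweight, mul_left_comm]
  exact mul_le_mul_of_nonneg_left (abs_quadForm_sub_sq_add_sq_le _ _ _ _) hweight.le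

end IsGenEig

section Asymptotics

variable {ι : Type*} {l : Filter ι}

lemma exists_eventually_abs_sub_div_le {a b : ι → ℝ} {L : ℝ} (ha : Tendsto a l atTop)
    (hb : limsup (fun i => ((|b i| / a i : ℝ) : EReal)) l < (L : EReal)) (lam : ℝ) :
    ∃ q < L, ∀ᶠ i in l, |(lam - b i) / a i| ≤ q := by
  obtain ⟨c, hbc, hcL⟩ := EReal.lt_iff_exists_real_btwn.mp hb
  obtain ⟨q, hcq, hqL⟩ := exists_between (EReal.coe_lt_coe_iff.mp hcL)
  have hlam : ∀ᶠ i in l, |lam| / a i < q - c :=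
    (ha.const_div_atTop |lam|).eventually_lt_const (sub_pos.mpr hcq)
  refine ⟨q, hqL, ?_⟩
  filter_upwards [eventually_lt_of_limsup_lt hbc, hlam, ha.eventually_gt_atTop 0]
    with i hbi hlami hai
  calc |(lam - b i) / a i| = |lam - b i| / a i := by rw [abs_div, abs_of_pos hai]
    _ ≤ |lam| / a i + |b i| / a i := by
        rw [← add_div]
        gcongr
        exact abs_sub _ _
    _ ≤ q := by linarith [EReal.coe_lt_coe_iff.mp hbi]

lemma exists_eventually_abs_sub_one_add_abs_mul_div_two_le {r t : ι → ℝ} {q : ℝ}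
    (hr : Tendsto r l (𝓝 1)) (hq : q < 2) (ht : ∀ᶠ i in l, |t i| ≤ q) :
    ∃ κ < 1, ∀ᶠ i in l, |r i - 1| + |r i * t i| / 2 ≤ κ := by
  obtain ⟨κ, hqκ, hκ⟩ := exists_between (show q / 2 < 1 by linarith)
  have hlim : Tendsto (fun i => |r i - 1| + |r i| * q / 2) l (𝓝 (q / 2)) := by
    simpa using (hr.sub_const 1).abs.add ((hr.abs.mul_const q).div_const 2)
  refine ⟨κ, hκ, ?_⟩
  filter_upwards [hlim.eventually_lt_const hqκ, ht] with i hi hti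
  refine le_trans ?_ hi.le
  rw [abs_mul]
  gcongr

end Asymptotics

/-- Proposition 4: two-sided comparison of `Sₙ` with `aₙ αₙ (uₙ₊₁² + uₙ²)`. -/
theorem S_comparable_aalpha
    (a b α : ℕ → ℝ) (ha : ∀ n, 0 < a n) (hα : ∀ n, 0 < α n)
    (lam : ℝ) (u : ℕ → ℝ) (hu : IsGenEig a b lam u)
    (S : ℕ → ℝ)
    (hS : ∀ n : ℕ, S (n + 1) =
      a n * α n * u n ^ 2 + a (n + 1) * α (n + 1) * u (n + 1) ^ 2
        - (lam - b (n + 1)) * α n * u n * u (n + 1))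
    (h1 : Tendsto a atTop atTop)
    (h6 : Tendsto (fun n => α n / α (n + 1) * (a (n + 1) / a n)) atTop (𝓝 1))
    (h7 : limsup (fun n => ((|b n| / a n : ℝ) : EReal)) atTop < ((2 : ℝ) : EReal)) :
    ∃ c₁ > (0 : ℝ), ∃ c₂ > (0 : ℝ), ∃ N : ℕ, ∀ n ≥ N,
      c₁ * (a n * α n) * (u (n + 1) ^ 2 + u n ^ 2) ≤ S n ∧
      S n ≤ c₂ * (a n * α n) * (u (n + 1) ^ 2 + u n ^ 2) := by
  obtain ⟨q, hq, ht⟩ := exists_eventually_abs_sub_div_le h1 h7 lam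
  obtain ⟨κ, hκ, hdev⟩ := exists_eventually_abs_sub_one_add_abs_mul_div_two_le h6 hq
    ((tendsto_add_atTop_nat 1).eventually ht)
  obtain ⟨N, hN⟩ := eventually_atTop.mp hdev
  have hκ₀ : 0 ≤ κ := le_trans (by positivity) (hN N le_rfl)
  refine ⟨1 - κ, sub_pos.mpr hκ, 1 + κ, by positivity, N + 1, fun n hn => ?_⟩
  obtain ⟨m, rfl⟩ := Nat.exists_eq_add_of_le' (le_of_add_le_right hn)
  have hweight : 0 < a (m + 1) * α (m + 1) := mul_pos (ha _) (hα _)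
  have hclose : |S (m + 1) - a (m + 1) * α (m + 1) * (u (m + 2) ^ 2 + u (m + 1) ^ 2)| ≤
      κ * (a (m + 1) * α (m + 1) * (u (m + 2) ^ 2 + u (m + 1) ^ 2)) := by
    rw [hS]
    exact (hu.abs_turanForm_sub_le (ha m).ne' (ha _) (hα _)).trans
      (mul_le_mul_of_nonneg_right (hN m (Nat.le_of_succ_le_succ hn)) (by positivity))
  obtain ⟨hlower, hupper⟩ := abs_le.mp hclose
  constructor <;> linarith
end
end

section
/- Let {a_n} be positive reals, {b_n} real, {α_n} positive reals, λ ∈ ℝ, and let {u_n} be a generalized eigenvector associated with λ. Set S_n = a_{n−1} α_{n−1} u_{n−1}² + a_n α_n u_n² − (λ − b_n) α_{n−1} u_{n−1} u_n. Assume a_n → ∞, (α_{n−1}/α_n)(a_n/a_{n−1}) → 1, limsup_{n→∞} |b_n|/a_n < 2, and ∑_{n≥0} 1/(a_n α_n) = ∞. If liminf_{n→∞} S_n > 0, then ∑_{n≥0} u_n² = ∞. -/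
/-!
The recurrence collapses `Sₙ₊₁` to the weighted Turán determinant
`aₙ₊₁ (αₙ₊₁ uₙ₊₁² - αₙ uₙ uₙ₊₂)`. Read backwards, it also bounds `aₙ uₙ` by
`aₙ₊₁ ‖(uₙ₊₁, uₙ₊₂)‖`, and since `αₙ aₙ₊₁ = O(αₙ₊₁ aₙ)` the product `αₙ uₙ uₙ₊₂` is controlled
without estimating `uₙ` itself. Hence `Sₙ₊₁ = O(aₙ₊₁ αₙ₊₁ ‖(uₙ₊₁, uₙ₊₂)‖²)`, and if `S` stays away
from zero then `1 / (aₙ αₙ) = O(‖(uₙ, uₙ₊₁)‖²)`, which is summable whenever `u` is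
square-summable.
-/

open Filter Topology

noncomputable section

open Asymptotics

section Asymptotic

variable {ι : Type*} {l : Filter ι}

lemma one_isBigO_of_liminf_pos {f : ι → ℝ} (h : 0 < liminf (fun i => (f i : EReal)) l) :
    (fun _ => (1 : ℝ)) =O[l] f := by
  obtain ⟨c, hc, hcf⟩ := EReal.lt_iff_exists_real_btwn.1 h
  have hc_pos : 0 < c := EReal.coe_pos.1 hc
  refine .of_bound c⁻¹ ?_
  filter_upwards [eventually_lt_of_lt_liminf hcf] with i hi
  have hcfi : c ≤ |f i| := (EReal.coe_lt_coe_iff.1 hi).le.trans (le_abs_self _)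
  rw [norm_one, Real.norm_eq_abs, ← inv_mul_cancel₀ hc_pos.ne']
  gcongr

lemma isBigO_of_limsup_abs_div_lt_top {f g : ι → ℝ} (hg : ∀ᶠ i in l, 0 < g i)
    (h : limsup (fun i => ((|f i| / g i : ℝ) : EReal)) l < ⊤) : f =O[l] g := by
  obtain ⟨c, hfc, -⟩ := EReal.lt_iff_exists_real_btwn.1 h
  refine .of_bound c ?_
  filter_upwards [hg, eventually_lt_of_limsup_lt hfc] with i hgi hi
  rw [Real.norm_eq_abs, Real.norm_of_nonneg hgi.le]
  exact ((div_lt_iff₀ hgi).1 (EReal.coe_lt_coe_iff.1 hi)).le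

end Asymptotic

lemma summable_inv_of_one_isBigO_mul {ι 𝕜 : Type*} [NormedDivisionRing 𝕜] [CompleteSpace 𝕜]
    {f g : ι → 𝕜} (h : (fun _ => (1 : 𝕜)) =O[cofinite] fun i => f i * g i)
    (hg : Summable fun i => ‖g i‖) : Summable fun i => (f i)⁻¹ := by
  refine summable_of_isBigO hg (IsBigO.norm_right ?_)
  have hfg : (fun i => (f i)⁻¹ * (f i * g i)) =O[cofinite] g :=
    isBigO_of_le _ fun i => by
      rw [← mul_assoc, norm_mul, norm_mul, norm_inv]
      exact mul_le_of_le_one_left (norm_nonneg _) inv_mul_le_one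
  simpa only [mul_one] using ((isBigO_refl (fun i => (f i)⁻¹) _).mul h).trans hfg

lemma summable_norm_prodMk_sq {ι E F : Type*} [SeminormedAddCommGroup E]
    [SeminormedAddCommGroup F] {f : ι → E} {g : ι → F} (hf : Summable fun i => ‖f i‖ ^ 2)
    (hg : Summable fun i => ‖g i‖ ^ 2) : Summable fun i => ‖(f i, g i)‖ ^ 2 := by
  refine (hf.add hg).of_nonneg_of_le (fun i => sq_nonneg _) fun i => ?_
  rw [Prod.norm_mk]
  rcases max_choice ‖f i‖ ‖g i‖ with hmax | hmax <;> rw [hmax]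
  · exact le_add_of_nonneg_right (sq_nonneg _)
  · exact le_add_of_nonneg_left (sq_nonneg _)

/-- The Turán determinant `uₙ₊₁² - uₙ uₙ₊₂` with weights `α`, scaled by `aₙ₊₁`; it is the closed
form of `Sₙ₊₁` along a generalized eigenvector. Indexing by `n` rather than `n + 1` avoids natural
subtraction. -/
def turanDet (a α u : ℕ → ℝ) (n : ℕ) : ℝ :=
  a (n + 1) * (α (n + 1) * u (n + 1) ^ 2 - α n * u n * u (n + 2))

namespace IsGenEig

variable {a b α u : ℕ → ℝ} {lam : ℝ}

lemma turanDet_eq (hu : IsGenEig a b lam u) (α : ℕ → ℝ) (n : ℕ) :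
    turanDet a α u n =
      a n * α n * u n ^ 2 + a (n + 1) * α (n + 1) * u (n + 1) ^ 2
        - (lam - b (n + 1)) * α n * u n * u (n + 1) := by
  unfold turanDet
  linear_combination -α n * u n * hu.2 n

lemma mul_isBigO_succ (hu : IsGenEig a b lam u) (hb : (fun n => lam - b n) =O[atTop] a) :
    (fun n => a n * u n) =O[atTop] fun n => a (n + 1) * ‖(u (n + 1), u (n + 2))‖ := by
  have hb' : (fun n => lam - b (n + 1)) =O[atTop] fun n => a (n + 1) :=
    hb.comp_tendsto (tendsto_add_atTop_nat 1)
  have hrec (n : ℕ) : (lam - b (n + 1)) * u (n + 1) - a (n + 1) * u (n + 2) = a n * u n := by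
    linear_combination -hu.2 n
  exact ((hb'.mul isBigO_fst_prod.norm_right).sub
    ((isBigO_refl _ _).mul isBigO_snd_prod.norm_right)).congr_left hrec

lemma turanDet_isBigO (hu : IsGenEig a b lam u) (hb : (fun n => lam - b n) =O[atTop] a)
    (hα : (fun n => α n * a (n + 1)) =O[atTop] fun n => α (n + 1) * a n) :
    turanDet a α u =O[atTop]
      fun n => a (n + 1) * α (n + 1) * ‖(u (n + 1), u (n + 2))‖ ^ 2 := by
  have hfst : (fun n => u (n + 1)) =O[atTop] fun n => ‖(u (n + 1), u (n + 2))‖ :=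
    isBigO_fst_prod.norm_right
  have hsnd : (fun n => u (n + 2)) =O[atTop] fun n => ‖(u (n + 1), u (n + 2))‖ :=
    isBigO_snd_prod.norm_right
  have hdiag : (fun n => a (n + 1) * α (n + 1) * u (n + 1) ^ 2) =O[atTop]
      fun n => a (n + 1) * α (n + 1) * ‖(u (n + 1), u (n + 2))‖ ^ 2 :=
    (isBigO_refl _ _).mul (hfst.pow 2)
  have hcross : (fun n => α n * a (n + 1) * u n * u (n + 2)) =O[atTop]
      fun n => a (n + 1) * α (n + 1) * ‖(u (n + 1), u (n + 2))‖ ^ 2 :=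
    calc (fun n => α n * a (n + 1) * u n * u (n + 2))
      _ =O[atTop] fun n => α (n + 1) * a n * u n * ‖(u (n + 1), u (n + 2))‖ :=
        (hα.mul (isBigO_refl _ _)).mul hsnd
      _ = fun n => α (n + 1) * (a n * u n) * ‖(u (n + 1), u (n + 2))‖ := by
        simp only [mul_assoc]
      _ =O[atTop] fun n => α (n + 1) * (a (n + 1) * ‖(u (n + 1), u (n + 2))‖)
          * ‖(u (n + 1), u (n + 2))‖ :=
        ((isBigO_refl _ _).mul (hu.mul_isBigO_succ hb)).mul (isBigO_refl _ _)
      _ = fun n => a (n + 1) * α (n + 1) * ‖(u (n + 1), u (n + 2))‖ ^ 2 := by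
        funext n
        ring
  exact (hdiag.sub hcross).congr_left fun n => by
    unfold turanDet
    ring

end IsGenEig

theorem not_square_summable_of_liminf_S_pos_general {a b α u S : ℕ → ℝ} {lam : ℝ}
    (hu : IsGenEig a b lam u)
    (hS : ∀ n, S (n + 1) =
      a n * α n * u n ^ 2 + a (n + 1) * α (n + 1) * u (n + 1) ^ 2
        - (lam - b (n + 1)) * α n * u n * u (n + 1))
    (hb : (fun n => lam - b n) =O[atTop] a)
    (hα : (fun n => α n * a (n + 1)) =O[atTop] fun n => α (n + 1) * a n)
    (hsum : ¬ Summable fun n => 1 / (a n * α n))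
    (hS_away : (fun _ => (1 : ℝ)) =O[atTop] S) :
    ¬ Summable fun n => u n ^ 2 := by
  intro husq
  have hone : (fun _ => (1 : ℝ)) =O[atTop]
      fun n => a (n + 1) * α (n + 1) * ‖(u (n + 1), u (n + 2))‖ ^ 2 :=
    (hS_away.comp_tendsto (tendsto_add_atTop_nat 1)).trans <|
      (hu.turanDet_isBigO hb hα).congr_left fun n => (hu.turanDet_eq α n).trans (hS n).symm
  have hshift (k : ℕ) : Summable fun n => ‖u (n + k)‖ ^ 2 := by
    simpa only [Real.norm_eq_abs, sq_abs] using (summable_nat_add_iff k).2 husq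
  have hpair : Summable fun n => ‖(u (n + 1), u (n + 2))‖ ^ 2 :=
    summable_norm_prodMk_sq (hshift 1) (hshift 2)
  have hinv : Summable fun n => (a (n + 1) * α (n + 1))⁻¹ :=
    summable_inv_of_one_isBigO_mul (Nat.cofinite_eq_atTop ▸ hone) hpair.norm
  simp only [one_div] at hsum
  exact hsum ((summable_nat_add_iff 1).1 hinv)

/-- Corollary 5: if additionally `∑ 1/(aₙαₙ) = ∞` and `liminf Sₙ > 0`, then the
generalized eigenvector `u` is not square-summable. -/
theorem not_square_summable_of_liminf_S_pos
    (a b α : ℕ → ℝ) (ha : ∀ n, 0 < a n) (hα : ∀ n, 0 < α n)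
    (lam : ℝ) (u : ℕ → ℝ) (hu : IsGenEig a b lam u)
    (S : ℕ → ℝ)
    (hS : ∀ n : ℕ, S (n + 1) =
      a n * α n * u n ^ 2 + a (n + 1) * α (n + 1) * u (n + 1) ^ 2
        - (lam - b (n + 1)) * α n * u n * u (n + 1))
    (h1 : Tendsto a atTop atTop)
    (h6 : Tendsto (fun n => α n / α (n + 1) * (a (n + 1) / a n)) atTop (𝓝 1))
    (h7 : limsup (fun n => ((|b n| / a n : ℝ) : EReal)) atTop < ((2 : ℝ) : EReal))
    (h5 : ¬ Summable fun n : ℕ => 1 / (a n * α n))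
    (hliminf : (0 : EReal) < liminf (fun n => (S n : EReal)) atTop) :
    ¬ Summable fun n => u n ^ 2 := by
  have hb : (fun n => lam - b n) =O[atTop] a :=
    (isLittleO_const_left.2 (.inr (tendsto_norm_atTop_atTop.comp h1))).isBigO.sub
      (isBigO_of_limsup_abs_div_lt_top (.of_forall ha) (h7.trans (EReal.coe_lt_top 2)))
  have hratio : (fun n => α n * a (n + 1)) =O[atTop] fun n => α (n + 1) * a n :=
    isBigO_of_div_tendsto_nhds
      (.of_forall fun n h => absurd h (mul_pos (hα (n + 1)) (ha n)).ne') 1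
      (h6.congr fun n => div_mul_div_comm _ _ _ _)
  exact not_square_summable_of_liminf_S_pos_general hu hS hb hratio h5
    (one_isBigO_of_liminf_pos hliminf)
end
end

section
/- Let {s_n}_{n≥N} be a sequence of real numbers with s_n > 0 for all n ≥ N. If ∑_{n≥N} [ (s_{n+1} − s_n)/s_n ]⁻ < ∞, then liminf_{n→∞} s_n > 0. -/
open Filter

/-!
If `a n` is the negative part of the `n`-th relative increment, then `s n * (1 - a n) ≤ s (n + 1)`,
so from any index on `s` decays no faster than the partial products of `1 - a n`. By the Weierstrass
product inequality `1 - ∑ a k ≤ ∏ (1 - a k)`, these stay away from zero once the tail of `∑ a k`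
is small.
-/

section OrderedAlgebra

theorem one_sub_sum_le_prod_one_sub {ι R : Type*} [CommRing R] [PartialOrder R] [IsOrderedRing R]
    (t : Finset ι) {a : ι → R} (ha_nonneg : ∀ i ∈ t, 0 ≤ a i) (ha_le_one : ∀ i ∈ t, a i ≤ 1) :
    1 - ∑ i ∈ t, a i ≤ ∏ i ∈ t, (1 - a i) := by
  classical
  induction t using Finset.induction_on with
  | empty => simp
  | insert i t hi ih =>
    rw [Finset.forall_mem_insert] at ha_nonneg ha_le_one
    have cross_nonneg : 0 ≤ a i * ∑ j ∈ t, a j :=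
      mul_nonneg ha_nonneg.1 (Finset.sum_nonneg ha_nonneg.2)
    rw [Finset.sum_insert hi, Finset.prod_insert hi]
    calc 1 - (a i + ∑ j ∈ t, a j)
        ≤ 1 - (a i + ∑ j ∈ t, a j) + a i * ∑ j ∈ t, a j := le_add_of_nonneg_right cross_nonneg
      _ = (1 - a i) * (1 - ∑ j ∈ t, a j) := by ring
      _ ≤ (1 - a i) * ∏ j ∈ t, (1 - a j) :=
        mul_le_mul_of_nonneg_left (ih ha_nonneg.2 ha_le_one.2) (sub_nonneg.2 ha_le_one.1)

theorem mul_prod_range_le_of_mul_le_succ {R : Type*} [CommSemiring R] [PartialOrder R]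
    [IsOrderedRing R] {u c : ℕ → R} {n : ℕ} (hc : ∀ k < n, 0 ≤ c k)
    (hu : ∀ k < n, u k * c k ≤ u (k + 1)) :
    u 0 * ∏ k ∈ Finset.range n, c k ≤ u n := by
  induction n with
  | zero => simp
  | succ n ih =>
    have ih' : u 0 * ∏ k ∈ Finset.range n, c k ≤ u n :=
      ih (fun k hk => hc k (hk.trans n.lt_succ_self)) fun k hk => hu k (hk.trans n.lt_succ_self)
    calc u 0 * ∏ k ∈ Finset.range (n + 1), c k
        = (u 0 * ∏ k ∈ Finset.range n, c k) * c n := by rw [Finset.prod_range_succ, mul_assoc]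
      _ ≤ u n * c n := mul_le_mul_of_nonneg_right ih' (hc n n.lt_succ_self)
      _ ≤ u (n + 1) := hu n n.lt_succ_self

theorem mul_one_sub_negPart_relative_increment_le {K : Type*} [Field K] [LinearOrder K]
    [IsStrictOrderedRing K] {x : K} (hx : 0 < x) (y : K) :
    x * (1 - ((y - x) / x)⁻) ≤ y := by
  calc x * (1 - ((y - x) / x)⁻)
      ≤ x * (1 + (y - x) / x) := by
        gcongr
        linarith [neg_le_negPart ((y - x) / x)]
    _ = y := by field_simp; ring

end OrderedAlgebra

section SummableDecrements

variable {a : ℕ → ℝ}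

theorem eventually_forall_le_prod_range_one_sub (ha_nonneg : ∀ n, 0 ≤ a n) (ha : Summable a)
    {r : ℝ} (hr : r < 1) :
    ∀ᶠ m in atTop, ∀ n, r ≤ ∏ k ∈ Finset.range n, (1 - a (k + m)) := by
  have tail_small : ∀ᶠ m in atTop, ∑' k, a (k + m) < 1 - r :=
    (tendsto_sum_nat_add a).eventually_lt_const (sub_pos.2 hr)
  have le_one : ∀ᶠ m in atTop, ∀ n ≥ m, a n ≤ 1 :=
    eventually_forall_ge_atTop.2 (ha.tendsto_atTop_zero.eventually_le_const zero_lt_one)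
  filter_upwards [tail_small, le_one] with m hm_tail hm_le_one n
  calc r ≤ 1 - ∑' k, a (k + m) := by linarith
    _ ≤ 1 - ∑ k ∈ Finset.range n, a (k + m) :=
      sub_le_sub_left (((summable_nat_add_iff m).2 ha).sum_le_tsum _ fun k _ => ha_nonneg _) 1
    _ ≤ ∏ k ∈ Finset.range n, (1 - a (k + m)) :=
      one_sub_sum_le_prod_one_sub _ (fun k _ => ha_nonneg _)
        fun k _ => hm_le_one _ (Nat.le_add_left m k)

theorem exists_pos_eventually_le_of_mul_one_sub_le_succ (ha_nonneg : ∀ n, 0 ≤ a n)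
    (ha : Summable a) {u : ℕ → ℝ} (hu_pos : ∃ᶠ n in atTop, 0 < u n)
    (hu : ∀ᶠ n in atTop, u n * (1 - a n) ≤ u (n + 1)) :
    ∃ c > 0, ∀ᶠ n in atTop, c ≤ u n := by
  have le_one : ∀ᶠ m in atTop, ∀ n ≥ m, a n ≤ 1 :=
    eventually_forall_ge_atTop.2 (ha.tendsto_atTop_zero.eventually_le_const zero_lt_one)
  have prod_ge : ∀ᶠ m in atTop, ∀ n, 1 / 2 ≤ ∏ k ∈ Finset.range n, (1 - a (k + m)) :=
    eventually_forall_le_prod_range_one_sub ha_nonneg ha one_half_lt_one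
  obtain ⟨m, hm_pos, hm_prod, hm_le_one, hm_step⟩ :=
    (hu_pos.and_eventually
      (prod_ge.and (le_one.and (eventually_forall_ge_atTop.2 hu)))).exists
  refine ⟨u m * (1 / 2), by positivity, ?_⟩
  filter_upwards [eventually_ge_atTop m] with n hn
  obtain ⟨j, rfl⟩ := Nat.exists_eq_add_of_le' hn
  calc u m * (1 / 2)
      ≤ u m * ∏ k ∈ Finset.range j, (1 - a (k + m)) := by gcongr; exact hm_prod j
    _ = u (0 + m) * ∏ k ∈ Finset.range j, (1 - a (k + m)) := by rw [zero_add]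
    _ ≤ u (j + m) :=
      mul_prod_range_le_of_mul_le_succ (u := fun k => u (k + m))
        (fun k _ => sub_nonneg.2 (hm_le_one _ (Nat.le_add_left m k)))
        fun k _ => by simpa only [add_right_comm] using hm_step _ (Nat.le_add_left m k)

end SummableDecrements

/-- If a sequence is eventually positive and the negative parts of its successive
relative increments are summable, then its lower limit is positive. -/
theorem liminf_pos_of_summable_neg_relative_increments
    (N : ℕ) (s : ℕ → ℝ) (hs : ∀ n, N ≤ n → 0 < s n)
    (h : Summable fun n : ℕ => max (-((s (N + n + 1) - s (N + n)) / s (N + n))) 0) :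
    (0 : EReal) < liminf (fun n => (s n : EReal)) atTop := by
  have pos : ∀ n, 0 < s (N + n) := fun n => hs _ (Nat.le_add_right N n)
  have step : ∀ n, s (N + n) * (1 - ((s (N + n + 1) - s (N + n)) / s (N + n))⁻) ≤ s (N + n + 1) :=
    fun n => mul_one_sub_negPart_relative_increment_le (pos n) _
  obtain ⟨c, hc_pos, hc_le⟩ : ∃ c > 0, ∀ᶠ n in atTop, c ≤ s (N + n) :=
    exists_pos_eventually_le_of_mul_one_sub_le_succ (fun _ => negPart_nonneg _) h
      (Frequently.of_forall pos) (Eventually.of_forall step)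
  calc (0 : EReal) < c := EReal.coe_pos.2 hc_pos
    _ ≤ liminf (fun n => (s (n + N) : EReal)) atTop :=
      le_liminf_of_le (by isBoundedDefault) <| hc_le.mono fun n hn => by
        rw [add_comm n N]
        exact EReal.coe_le_coe_iff.2 hn
    _ = liminf (fun n => (s n : EReal)) atTop := liminf_nat_add (fun n => (s n : EReal)) N
end

section
/- Let {a_n} be positive reals, {b_n} real, and {α_n} positive reals satisfying conditions (a)–(g): (a) a_n → ∞; (b) ∑_{n≥1} [ (a_{n+1}/a_n)(α_{n+1}/α_n) − (a_n/a_{n−1})(α_{n−1}/α_n) ]⁻ < ∞; (c) ∑_{n≥1} (1/a_{n−1}) | a_{n−1}/a_n − α_{n−1}/α_n | < ∞; (d) ∑_{n≥1} | b_{n+1}/a_n − (b_n/a_{n−1})(α_{n−1}/α_n) | < ∞; (e) ∑_{n≥0} 1/(a_n α_n) = ∞; (f) (α_{n−1}/α_n)(a_n/a_{n−1}) → 1; (g) limsup_{n→∞} |b_n|/a_n < 2. Then for every λ ∈ ℝ and every generalized eigenvector {u_n} associated with λ, the sequence S_n = a_{n−1} α_{n−1} u_{n−1}² + a_n α_n u_n²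 − (λ − b_n) α_{n−1} u_{n−1} u_n satisfies liminf_{n→∞} S_n > 0. -/
/-!
Eliminating `uₙ` through the recurrence turns `Sₙ₊₁` into `aₙ₊₁ αₙ₊₁` times the quadratic form
`x² + r y² - r p x y` in `x = uₙ₊₁`, `y = uₙ₊₂`, where `p = (lam - bₙ₊₁) / aₙ₊₁` and
`r = (αₙ / αₙ₊₁) (aₙ₊₁ / aₙ) → 1`. Since `limsup |p| < 2`, this form is eventually uniformly
positive definite, so `Sₙ₊₁` dominates a multiple of the energy `aₙ₊₁ αₙ₊₁ (uₙ₊₁² + uₙ₊₂²)`.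

The same form appears in the definition of `Sₙ₊₂`, up to a perturbation of its coefficients in
which the `uₙ₊₁²` terms cancel. Hence `Sₙ₊₂ ≥ (1 - eₙ) Sₙ₊₁` eventually, with `e` nonnegative and
summable, and a positive sequence with this property stays away from zero.

The parameter `lam` enters only through `lam - b`: as `a → ∞`, replacing `b` by `lam - b` leaves the
bound on `limsup |b| / a` intact, and it changes the variation of `b` by a summable multiple of the
terms in (c).
-/

open Filter Topology

noncomputable section

section RealLimits

variable {ι : Type*} {l : Filter ι}

lemma limsup_coe_lt_coe_iff {f : ι → ℝ} {t : ℝ} :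
    limsup (fun i => (f i : EReal)) l < (t : EReal) ↔ ∃ q < t, ∀ᶠ i in l, f i ≤ q := by
  constructor
  · intro h
    obtain ⟨q, hq, hqt⟩ := EReal.lt_iff_exists_real_btwn.1 h
    refine ⟨q, EReal.coe_lt_coe_iff.1 hqt, (eventually_lt_of_limsup_lt hq).mono fun i hi => ?_⟩
    exact (EReal.coe_lt_coe_iff.1 hi).le
  · rintro ⟨q, hqt, hq⟩
    refine (limsup_le_of_le (h := ?_)).trans_lt (EReal.coe_lt_coe_iff.2 hqt)
    exact hq.mono fun i hi => EReal.coe_le_coe_iff.2 hi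

lemma coe_lt_liminf_coe {f : ι → ℝ} {t m : ℝ} (htm : t < m) (hm : ∀ᶠ i in l, m ≤ f i) :
    (t : EReal) < liminf (fun i => (f i : EReal)) l :=
  (EReal.coe_lt_coe_iff.2 htm).trans_le <|
    le_liminf_of_le (h := hm.mono fun _ hi => EReal.coe_le_coe_iff.2 hi)

lemma limsup_abs_sub_div_lt {a b : ι → ℝ} {t : ℝ} (ha : Tendsto a l atTop)
    (hb : limsup (fun i => ((|b i| / a i : ℝ) : EReal)) l < (t : EReal)) (lam : ℝ) :
    limsup (fun i => ((|lam - b i| / a i : ℝ) : EReal)) l < (t : EReal) := by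
  obtain ⟨q, hqt, hq⟩ := limsup_coe_lt_coe_iff.1 hb
  have hlam : ∀ᶠ i in l, |lam| / a i < (t - q) / 2 :=
    (ha.const_div_atTop |lam|).eventually_lt_const (by linarith)
  refine limsup_coe_lt_coe_iff.2 ⟨(q + t) / 2, by linarith, ?_⟩
  filter_upwards [hq, hlam, ha.eventually_gt_atTop 0] with i hbi hlami hai
  calc |lam - b i| / a i ≤ (|lam| + |b i|) / a i := by gcongr; exact abs_sub _ _
    _ = |lam| / a i + |b i| / a i := add_div _ _ _
    _ ≤ (q + t) / 2 := by linarith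

end RealLimits

lemma one_sub_sum_mul_le_of_step {T e : ℕ → ℝ} (he : ∀ n, 0 ≤ e n) (hT : 0 ≤ T 0)
    (hsum : ∀ k, ∑ i ∈ Finset.range k, e i ≤ 1)
    (hstep : ∀ n, (1 - e n) * T n ≤ T (n + 1)) (k : ℕ) :
    (1 - ∑ i ∈ Finset.range k, e i) * T 0 ≤ T k := by
  induction k with
  | zero => simp
  | succ k ih =>
    have hσ : 0 ≤ ∑ i ∈ Finset.range k, e i := Finset.sum_nonneg fun i _ => he i
    have he1 : e k ≤ 1 := by
      have := hsum (k + 1)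
      rw [Finset.sum_range_succ] at this
      linarith
    calc (1 - ∑ i ∈ Finset.range (k + 1), e i) * T 0
        ≤ (1 - e k) * ((1 - ∑ i ∈ Finset.range k, e i) * T 0) := by
          rw [Finset.sum_range_succ]
          linarith [mul_nonneg (mul_nonneg (he k) hσ) hT]
      _ ≤ (1 - e k) * T k := mul_le_mul_of_nonneg_left ih (sub_nonneg.2 he1)
      _ ≤ T (k + 1) := hstep k

lemma exists_pos_eventually_le_of_step {T e : ℕ → ℝ} (he : ∀ n, 0 ≤ e n) (hs : Summable e)
    (hT : ∀ᶠ n in atTop, 0 < T n) (hstep : ∀ᶠ n in atTop, (1 - e n) * T n ≤ T (n + 1)) :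
    ∃ m > 0, ∀ᶠ n in atTop, m ≤ T n := by
  have htail : ∀ᶠ N in atTop, ∑' k, e (k + N) < 1 / 2 :=
    (tendsto_sum_nat_add e).eventually_lt_const (by norm_num)
  obtain ⟨N, hN⟩ := eventually_atTop.1 (hT.and (hstep.and htail))
  have hpos : 0 < T N := (hN N le_rfl).1
  have hsum (k : ℕ) : ∑ i ∈ Finset.range k, e (i + N) ≤ 1 / 2 :=
    (((summable_nat_add_iff N).2 hs).sum_le_tsum _ fun i _ => he _).trans (hN N le_rfl).2.2.le
  refine ⟨T N / 2, half_pos hpos, eventually_atTop.2 ⟨N, fun n hn => ?_⟩⟩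
  obtain ⟨k, rfl⟩ := Nat.exists_eq_add_of_le' hn
  have hk : (1 - ∑ i ∈ Finset.range k, e (i + N)) * T (0 + N) ≤ T (k + N) :=
    one_sub_sum_mul_le_of_step (T := fun n => T (n + N)) (fun n => he (n + N))
      (by simpa using hpos.le) (fun k => (hsum k).trans (by norm_num))
      (fun n => by simpa [add_right_comm] using (hN (n + N) (by omega)).2.1) k
  rw [zero_add] at hk
  linarith [mul_le_mul_of_nonneg_right (hsum k) hpos.le]

section BinaryForms

variable (x y : ℝ)

lemma mul_mul_le_abs_div_two_mul_sq_add_sq (s : ℝ) : s * (x * y) ≤ |s| / 2 * (x ^ 2 + y ^ 2) := by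
  have hxy : 2 * |x * y| ≤ x ^ 2 + y ^ 2 := by
    simpa [abs_mul, mul_assoc] using two_mul_le_add_sq |x| |y|
  calc s * (x * y) ≤ |s| * |x * y| := (le_abs_self _).trans_eq (abs_mul _ _)
    _ ≤ |s| / 2 * (x ^ 2 + y ^ 2) := by
      linarith [mul_le_mul_of_nonneg_left hxy (abs_nonneg s)]

lemma mul_sq_add_sq_le_of_abs_div_two_le {A B s κ : ℝ} (hA : |s| / 2 + κ ≤ A)
    (hB : |s| / 2 + κ ≤ B) : κ * (x ^ 2 + y ^ 2) ≤ A * x ^ 2 + B * y ^ 2 - s * (x * y) := by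
  have hs := mul_mul_le_abs_div_two_mul_sq_add_sq x y s
  have hx := mul_le_mul_of_nonneg_right hA (sq_nonneg x)
  have hy := mul_le_mul_of_nonneg_right hB (sq_nonneg y)
  linarith

lemma neg_mul_sq_add_sq_le (A s : ℝ) :
    -((max (-A) 0 + |s| / 2) * (x ^ 2 + y ^ 2)) ≤ A * y ^ 2 - s * (x * y) := by
  have hs := mul_mul_le_abs_div_two_mul_sq_add_sq x y s
  have hx : 0 ≤ max (-A) 0 * x ^ 2 := mul_nonneg (le_max_right _ _) (sq_nonneg x)
  have hy : -A * y ^ 2 ≤ max (-A) 0 * y ^ 2 := by gcongr; exact le_max_left _ _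
  linarith

end BinaryForms

/-- The quadratic form `Sₙ₊₁` in `(uₙ, uₙ₊₁)`; the index is shifted by one to avoid a truncated
`n - 1`. -/
def eigForm (a b α : ℕ → ℝ) (lam : ℝ) (u : ℕ → ℝ) (n : ℕ) : ℝ :=
  a n * α n * u n ^ 2 + a (n + 1) * α (n + 1) * u (n + 1) ^ 2
    - (lam - b (n + 1)) * α n * u n * u (n + 1)

/-- The weighted energy `aₙ αₙ (uₙ² + uₙ₊₁²)`, the positive quantity against which both `eigForm`
and its increments are measured. -/
def eigEnergy (a α u : ℕ → ℝ) (n : ℕ) : ℝ :=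
  a n * α n * (u n ^ 2 + u (n + 1) ^ 2)

/-- An upper bound for the decrease of `eigForm` from `n` to `n + 1`, relative to the energy at
`n + 1`. The maximum with `0` is the negative part `[·]⁻`. -/
def eigFormLoss (a b α : ℕ → ℝ) (lam : ℝ) (n : ℕ) : ℝ :=
  max (-(a (n + 2) / a (n + 1) * (α (n + 2) / α (n + 1)) - a (n + 1) / a n * (α n / α (n + 1)))) 0
    + |(lam - b (n + 2)) / a (n + 1) - (lam - b (n + 1)) / a n * (α n / α (n + 1))| / 2

section EigForm

variable {a b α u : ℕ → ℝ} {lam : ℝ}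

lemma IsGenEig.not_both_zero (ha : ∀ n, a n ≠ 0) (hu : IsGenEig a b lam u) (n : ℕ) :
    ¬(u n = 0 ∧ u (n + 1) = 0) := by
  induction n with
  | zero => exact hu.1
  | succ n ih =>
    rintro ⟨h1, h2⟩
    have hrec := hu.2 n
    rw [h1, h2, mul_zero, mul_zero, zero_sub, zero_eq_neg] at hrec
    exact ih ⟨(mul_eq_zero.1 hrec).resolve_left (ha n), h1⟩

lemma IsGenEig.eigEnergy_pos (ha : ∀ n, 0 < a n) (hα : ∀ n, 0 < α n) (hu : IsGenEig a b lam u)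
    (n : ℕ) : 0 < eigEnergy a α u n := by
  refine mul_pos (mul_pos (ha n) (hα n)) ?_
  rcases not_and_or.1 (hu.not_both_zero (fun k => (ha k).ne') n) with h | h <;> positivity

lemma IsGenEig.eigForm_eq (ha : ∀ n, a n ≠ 0) (hα : ∀ n, α n ≠ 0) (hu : IsGenEig a b lam u)
    (n : ℕ) :
    eigForm a b α lam u n = a (n + 1) * α (n + 1) * (u (n + 1) ^ 2
      + α n / α (n + 1) * (a (n + 1) / a n) * u (n + 2) ^ 2
      - α n / α (n + 1) * (a (n + 1) / a n) * ((lam - b (n + 1)) / a (n + 1))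
        * (u (n + 1) * u (n + 2))) := by
  have hun : u n = ((lam - b (n + 1)) * u (n + 1) - a (n + 1) * u (n + 2)) / a n := by
    rw [eq_div_iff (ha n), hu.2 n]
    ring
  have ha0 := ha n
  have ha1 := ha (n + 1)
  have hα1 := hα (n + 1)
  rw [eigForm, hun]
  field_simp
  ring

lemma IsGenEig.eigForm_succ_sub (ha : ∀ n, a n ≠ 0) (hα : ∀ n, α n ≠ 0)
    (hu : IsGenEig a b lam u) (n : ℕ) :
    eigForm a b α lam u (n + 1) - eigForm a b α lam u n = a (n + 1) * α (n + 1) *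
      ((a (n + 2) / a (n + 1) * (α (n + 2) / α (n + 1)) - a (n + 1) / a n * (α n / α (n + 1)))
          * u (n + 2) ^ 2
        - ((lam - b (n + 2)) / a (n + 1) - (lam - b (n + 1)) / a n * (α n / α (n + 1)))
          * (u (n + 1) * u (n + 2))) := by
  have ha0 := ha n
  have ha1 := ha (n + 1)
  have hα1 := hα (n + 1)
  rw [hu.eigForm_eq ha hα n, eigForm]
  field_simp
  ring

lemma IsGenEig.neg_loss_mul_energy_le (ha : ∀ n, 0 < a n) (hα : ∀ n, 0 < α n)
    (hu : IsGenEig a b lam u) (n : ℕ) :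
    -(eigFormLoss a b α lam n * eigEnergy a α u (n + 1)) ≤
      eigForm a b α lam u (n + 1) - eigForm a b α lam u n := by
  rw [hu.eigForm_succ_sub (fun k => (ha k).ne') (fun k => (hα k).ne'), eigEnergy,
    mul_left_comm, ← mul_neg]
  exact mul_le_mul_of_nonneg_left (neg_mul_sq_add_sq_le _ _ _ _) (mul_pos (ha _) (hα _)).le

lemma eigFormLoss_nonneg (n : ℕ) : 0 ≤ eigFormLoss a b α lam n :=
  add_nonneg (le_max_right _ _) (by positivity)

lemma IsGenEig.exists_mul_energy_le_eigForm (ha : ∀ n, 0 < a n) (hα : ∀ n, 0 < α n)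
    (hr : Tendsto (fun n => α n / α (n + 1) * (a (n + 1) / a n)) atTop (𝓝 1))
    (hp : limsup (fun n => ((|lam - b n| / a n : ℝ) : EReal)) atTop < ((2 : ℝ) : EReal))
    (hu : IsGenEig a b lam u) :
    ∃ κ > 0, ∀ᶠ n in atTop, κ * eigEnergy a α u (n + 1) ≤ eigForm a b α lam u n := by
  obtain ⟨q, hq2, hq⟩ := limsup_coe_lt_coe_iff.1 hp
  set r : ℕ → ℝ := fun n => α n / α (n + 1) * (a (n + 1) / a n)
  -- `κ` is half the gap `1 - q / 2` by which the limiting form `x² + y² - q x y` is definite.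
  set κ : ℝ := (2 - q) / 4 with hκ
  have hlim : Tendsto (fun n => |r n| * q / 2 + κ) atTop (𝓝 (|1| * q / 2 + κ)) :=
    ((hr.abs.mul_const q).div_const 2).add_const κ
  have hgap : |1| * q / 2 + κ < 1 := by rw [abs_one]; linarith
  refine ⟨κ, by linarith, ?_⟩
  filter_upwards [(tendsto_add_atTop_nat 1).eventually hq, hlim.eventually_lt_const hgap,
    hlim.eventually_lt hr hgap] with n hqn h1 h2
  have hs : |r n * ((lam - b (n + 1)) / a (n + 1))| ≤ |r n| * q := by
    rw [abs_mul, abs_div, abs_of_pos (ha (n + 1))]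
    gcongr
  rw [hu.eigForm_eq (fun k => (ha k).ne') (fun k => (hα k).ne'), eigEnergy, mul_left_comm]
  refine mul_le_mul_of_nonneg_left ?_ (mul_pos (ha _) (hα _)).le
  simpa only [one_mul] using
    mul_sq_add_sq_le_of_abs_div_two_le (u (n + 1)) (u (n + 2)) (A := 1) (B := r n)
      (by linarith) (by linarith)

lemma IsGenEig.exists_pos_eventually_le_eigForm (ha : ∀ n, 0 < a n) (hα : ∀ n, 0 < α n)
    (hloss : Summable (eigFormLoss a b α lam))
    (hr : Tendsto (fun n => α n / α (n + 1) * (a (n + 1) / a n)) atTop (𝓝 1))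
    (hp : limsup (fun n => ((|lam - b n| / a n : ℝ) : EReal)) atTop < ((2 : ℝ) : EReal))
    (hu : IsGenEig a b lam u) :
    ∃ m > 0, ∀ᶠ n in atTop, m ≤ eigForm a b α lam u n := by
  obtain ⟨κ, hκ, hlow⟩ := hu.exists_mul_energy_le_eigForm ha hα hr hp
  refine exists_pos_eventually_le_of_step
    (fun n => div_nonneg (eigFormLoss_nonneg n) hκ.le) (hloss.div_const κ) ?_ ?_
  · exact hlow.mono fun n hn => (mul_pos hκ (hu.eigEnergy_pos ha hα (n + 1))).trans_le hn
  · filter_upwards [hlow] with n hn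
    have henergy : eigFormLoss a b α lam n * eigEnergy a α u (n + 1)
        ≤ eigFormLoss a b α lam n / κ * eigForm a b α lam u n := by
      rw [div_mul_eq_mul_div, mul_div_assoc]
      exact mul_le_mul_of_nonneg_left ((le_div_iff₀' hκ).2 hn) (eigFormLoss_nonneg n)
    linarith [hu.neg_loss_mul_energy_le ha hα n]

end EigForm

lemma summable_abs_sub_div_sub {a b α : ℕ → ℝ} (ha : ∀ n, 0 < a n)
    (hα : Summable fun n : ℕ => 1 / a n * |a n / a (n + 1) - α n / α (n + 1)|)
    (hb : Summable fun n : ℕ => |b (n + 2) / a (n + 1) - b (n + 1) / a n * (α n / α (n + 1))|)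
    (lam : ℝ) :
    Summable fun n : ℕ =>
      |(lam - b (n + 2)) / a (n + 1) - (lam - b (n + 1)) / a n * (α n / α (n + 1))| := by
  refine .of_nonneg_of_le (fun n => abs_nonneg _) (fun n => ?_) ((hα.mul_left |lam|).add hb)
  have ha0 := (ha n).ne'
  calc |(lam - b (n + 2)) / a (n + 1) - (lam - b (n + 1)) / a n * (α n / α (n + 1))|
      = |lam * (1 / a n * (a n / a (n + 1) - α n / α (n + 1)))
          - (b (n + 2) / a (n + 1) - b (n + 1) / a n * (α n / α (n + 1)))| := by
        congr 1
        field_simp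
        ring
    _ ≤ |lam * (1 / a n * (a n / a (n + 1) - α n / α (n + 1)))|
          + |b (n + 2) / a (n + 1) - b (n + 1) / a n * (α n / α (n + 1))| := abs_sub _ _
    _ = |lam| * (1 / a n * |a n / a (n + 1) - α n / α (n + 1)|)
          + |b (n + 2) / a (n + 1) - b (n + 1) / a n * (α n / α (n + 1))| := by
        rw [abs_mul, abs_mul, abs_of_pos (one_div_pos.2 (ha n))]

theorem liminf_S_pos_general
    (a b α : ℕ → ℝ) (ha : ∀ n, 0 < a n) (hα : ∀ n, 0 < α n) (lam : ℝ)
    (hneg : Summable fun n : ℕ =>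
      max (-(a (n + 2) / a (n + 1) * (α (n + 2) / α (n + 1))
            - a (n + 1) / a n * (α n / α (n + 1)))) 0)
    (hvar : Summable fun n : ℕ =>
      |(lam - b (n + 2)) / a (n + 1) - (lam - b (n + 1)) / a n * (α n / α (n + 1))|)
    (hr : Tendsto (fun n => α n / α (n + 1) * (a (n + 1) / a n)) atTop (𝓝 1))
    (hp : limsup (fun n => ((|lam - b n| / a n : ℝ) : EReal)) atTop < ((2 : ℝ) : EReal))
    (u : ℕ → ℝ) (hu : IsGenEig a b lam u)
    (S : ℕ → ℝ)
    (hS : ∀ n : ℕ, S (n + 1) =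
      a n * α n * u n ^ 2 + a (n + 1) * α (n + 1) * u (n + 1) ^ 2
        - (lam - b (n + 1)) * α n * u n * u (n + 1)) :
    (0 : EReal) < liminf (fun n => (S n : EReal)) atTop := by
  have hloss : Summable (eigFormLoss a b α lam) := hneg.add (hvar.div_const 2)
  obtain ⟨m, hm, hle⟩ := hu.exists_pos_eventually_le_eigForm ha hα hloss hr hp
  rw [← liminf_nat_add _ 1]
  exact coe_lt_liminf_coe hm (hle.mono fun n hn => hn.trans_eq (hS n).symm)

/-- Under conditions (a)–(g), for every generalized eigenvector the associated
sequence `Sₙ` satisfies `liminf Sₙ > 0`. -/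
theorem liminf_S_pos
    (a b α : ℕ → ℝ) (ha : ∀ n, 0 < a n) (hα : ∀ n, 0 < α n)
    (h1 : Tendsto a atTop atTop)
    (h2 : Summable fun n : ℕ =>
      max (-(a (n + 2) / a (n + 1) * (α (n + 2) / α (n + 1))
            - a (n + 1) / a n * (α n / α (n + 1)))) 0)
    (h3 : Summable fun n : ℕ => 1 / a n * |a n / a (n + 1) - α n / α (n + 1)|)
    (h4 : Summable fun n : ℕ => |b (n + 2) / a (n + 1) - b (n + 1) / a n * (α n / α (n + 1))|)
    (h5 : ¬ Summable fun n : ℕ => 1 / (a n * α n))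
    (h6 : Tendsto (fun n => α n / α (n + 1) * (a (n + 1) / a n)) atTop (𝓝 1))
    (h7 : limsup (fun n => ((|b n| / a n : ℝ) : EReal)) atTop < ((2 : ℝ) : EReal))
    (lam : ℝ) (u : ℕ → ℝ) (hu : IsGenEig a b lam u)
    (S : ℕ → ℝ)
    (hS : ∀ n : ℕ, S (n + 1) =
      a n * α n * u n ^ 2 + a (n + 1) * α (n + 1) * u (n + 1) ^ 2
        - (lam - b (n + 1)) * α n * u n * u (n + 1)) :
    (0 : EReal) < liminf (fun n => (S n : EReal)) atTop := by
  exact liminf_S_pos_general a b α ha hα lam h2 (summable_abs_sub_div_sub ha h3 h4 lam) h6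
    (limsup_abs_sub_div_lt h1 h7 lam) u hu S hS
end
end

section
/- Let {a_n} be a sequence of positive reals such that a_n → ∞, ∑_{n≥0} 1/a_n = ∞, and the sequence {a_{n−1}/a_n} is of bounded variation (∑_{n} |a_n/a_{n+1} − a_{n−1}/a_n| < ∞). Then a_{n−1}/a_n → 1 (and consequently a_{n+1}/a_n → 1). -/
open Filter Topology

/-!
Bounded variation makes the ratios `a n / a (n + 1)` a Cauchy sequence, say with limit `L`.
They are also the ratios of consecutive terms of `∑ 1 / a n`, so divergence and the ratio test give
`1 ≤ L`. Since `a → ∞`, infinitely often `a n < a (n + 1)`, so infinitely many ratios are below `1`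
and `L ≤ 1`.
-/

theorem frequently_lt_add_one_of_tendsto_atTop {α : Type*} [LinearOrder α] [NoMaxOrder α]
    {a : ℕ → α} (ha : Tendsto a atTop atTop) : ∃ᶠ n in atTop, a n < a (n + 1) := by
  refine frequently_atTop.2 fun N => ?_
  obtain ⟨m, hm, hmax⟩ := high_scores ha (N + 1)
  obtain ⟨n, rfl⟩ := Nat.exists_eq_add_one.2 (Nat.zero_lt_of_lt hm)
  exact ⟨n, Nat.le_of_succ_le_succ hm, hmax n n.lt_succ_self⟩

theorem le_one_of_tendsto_div_add_one {K : Type*} [Field K] [LinearOrder K]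
    [IsStrictOrderedRing K] [TopologicalSpace K] [ClosedIicTopology K] {a : ℕ → K} {L : K}
    (ha : Tendsto a atTop atTop) (hL : Tendsto (fun n => a n / a (n + 1)) atTop (𝓝 L)) :
    L ≤ 1 := by
  have hpos : ∀ᶠ n in atTop, 0 < a (n + 1) :=
    (tendsto_add_atTop_nat 1).eventually (ha.eventually_gt_atTop 0)
  refine le_of_tendsto_of_frequently hL ?_
  exact ((frequently_lt_add_one_of_tendsto_atTop ha).and_eventually hpos).mono
    fun n ⟨hlt, hn⟩ => ((div_lt_one hn).2 hlt).le

theorem one_le_of_tendsto_norm_div_add_one {K : Type*} [NormedDivisionRing K] [CompleteSpace K]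
    {a : ℕ → K} {L : ℝ} (ha : ∀ᶠ n in atTop, a n ≠ 0) (hsum : ¬ Summable fun n => 1 / a n)
    (hL : Tendsto (fun n => ‖a n / a (n + 1)‖) atTop (𝓝 L)) : 1 ≤ L := by
  by_contra! hlt
  refine hsum (summable_of_ratio_test_tendsto_lt_one hlt
    (ha.mono fun n hn => one_div_ne_zero hn) (hL.congr fun n => ?_))
  rw [norm_div, norm_div, norm_div, div_div_div_cancel_left' _ _ (by simp)]

theorem eq_one_of_tendsto_div_add_one {a : ℕ → ℝ} {L : ℝ} (ha : Tendsto a atTop atTop)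
    (hsum : ¬ Summable fun n => 1 / a n)
    (hL : Tendsto (fun n => a n / a (n + 1)) atTop (𝓝 L)) : L = 1 := by
  have hpos : ∀ᶠ n in atTop, 0 < a n := ha.eventually_gt_atTop 0
  have hL_nonneg : 0 ≤ L := by
    refine ge_of_tendsto hL ?_
    filter_upwards [hpos, (tendsto_add_atTop_nat 1).eventually hpos] with n hn hn'
    exact (div_pos hn hn').le
  have hL_norm : 1 ≤ ‖L‖ :=
    one_le_of_tendsto_norm_div_add_one (hpos.mono fun _ hn => hn.ne') hsum hL.norm
  rw [Real.norm_of_nonneg hL_nonneg] at hL_norm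
  exact le_antisymm (le_one_of_tendsto_div_add_one ha hL) hL_norm

theorem ratio_tendsto_one_of_boundedVariation_general {a : ℕ → ℝ} (ha : Tendsto a atTop atTop)
    (hsum : ¬ Summable fun n => 1 / a n) (hratio : CauchySeq fun n => a n / a (n + 1)) :
    Tendsto (fun n => a n / a (n + 1)) atTop (𝓝 1) ∧
    Tendsto (fun n => a (n + 1) / a n) atTop (𝓝 1) := by
  obtain ⟨L, hL⟩ := cauchySeq_tendsto_of_complete hratio
  obtain rfl : L = 1 := eq_one_of_tendsto_div_add_one ha hsum hL
  exact ⟨hL, by simpa only [inv_div, inv_one] using hL.inv₀ one_ne_zero⟩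

/-- If `aₙ → ∞`, `∑ 1/aₙ = ∞` and the sequence `aₙ₋₁/aₙ` has bounded variation,
then `aₙ₋₁/aₙ → 1` (and consequently `aₙ₊₁/aₙ → 1`). -/
theorem ratio_tendsto_one_of_boundedVariation
    (a : ℕ → ℝ) (ha : ∀ n, 0 < a n)
    (h1 : Tendsto a atTop atTop)
    (h2 : ¬ Summable fun n : ℕ => 1 / a n)
    (h3 : Summable fun n : ℕ => |a (n + 1) / a (n + 2) - a n / a (n + 1)|) :
    Tendsto (fun n => a n / a (n + 1)) atTop (𝓝 1) ∧
    Tendsto (fun n => a (n + 1) / a n) atTop (𝓝 1) :=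
  ratio_tendsto_one_of_boundedVariation_general h1 h2 <| cauchySeq_of_summable_dist <| by
    simpa only [Real.dist_eq, abs_sub_comm] using h3
end
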